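/- Let L ⊊ S, so that the subgroup W_L generated by L is a finite Weyl group, with longest element w_L. Then (Σ_{x∈W_L, w_L x w_L = x} q^{ℓ(x)}) · (1−q)^{n_L} = (Σ_{x∈W_L} (−q)^{ℓ(x)}) · (1+q)^{n_L} as polynomials in q; equivalently, P_{L,Ad(w_L)}(q) = P_L(−q)·((1+q)/(1−q))^{n_L} in ℚ(q), where Ad(w_L) is conjugation by w_L on W_L. -/

import Mathlib

set_option synthInstance.maxHeartbeats 1000000
set_option maxHeartbeats 2000000

open scoped Classical

noncomputable section

namespace LY

/-! ## The coefficient field `ℚ(q)` -/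

/-- The field `ℚ(q)` of rational functions. -/
abbrev K : Type := RatFunc ℚ

/-- The indeterminate `q`. -/
def qK : K := RatFunc.X

/-- The inclusion `ℤ[q] → ℚ(q)`. -/
def toK (p : Polynomial ℤ) : K := algebraMap (Polynomial ℚ) K (p.map (Int.castRingHom ℚ))

/-- Evaluation of `p ∈ ℤ[q]` at `−q`, as an element of `ℚ(q)`; i.e. `p(−q)`. -/
def atNegQ (p : Polynomial ℤ) : K := Polynomial.eval₂ (Int.castRingHom K) (-qK) p

/-- The standard basis element `T_w` (resp. `a_w`) of the function model `W → ℚ(q)`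
of the Hecke algebra (resp. of the Lusztig–Vogan module `M`). -/
def TT {W : Type} (w : W) : W → K := fun y => if y = w then 1 else 0

variable {B W : Type} [Group W] {M : CoxeterMatrix B}

/-- The Bruhat order on a Coxeter group: `u ≤ v` iff `v` is obtained from `u` by successive
right multiplications by reflections, each increasing the length. -/
def BruhatLE (cs : CoxeterSystem M W) (u v : W) : Prop :=
  Relation.ReflTransGen
    (fun a b => cs.length a < cs.length b ∧ ∃ t, cs.IsReflection t ∧ b = a * t) u v

/-- Connectedness of the Coxeter diagram of `M`. -/
def DiagramConnected (M : CoxeterMatrix B) : Prop :=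
  ∀ i j : B, Relation.ReflTransGen (fun a b => a ≠ b ∧ M a b ≠ 2) i j

/-- An automorphism of `W` preserving the set `S` of simple reflections, i.e. an element
of `A = Aut(W,S)`. -/
def IsDiagAut (cs : CoxeterSystem M W) (a : MulAut W) : Prop :=
  (⇑a) '' (Set.range cs.simple) = Set.range cs.simple

/-! ## The affine setting -/

/-- All the data and axioms describing the setting: `(W,S)` is the Coxeter group of an
untwisted connected affine Dynkin diagram (an irreducible affine Weyl group); `Λ` is the
subgroup of translations (elements with finite conjugacy class), free abelian of finite
rank and of finite index; `s₀` is a hyperspecial vertex, `J = S − {s₀}`, `W_J` is the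
finite subgroup generated by `J` with longest element `w_J`; `*` is the involution of `W`
given by `w* = w_J w w_J` on `W_J` and `λ* = −(ʷᴶλ)` on `Λ`; `pr` is the projection
`W → W_J` along `Λ`; `ρ` is the conjugation action of `W` on `Λ_ℚ ≅ ℚ^rank`
(via the identification `freeIso` of `Λ` with `ℤ^rank`). -/
structure AffineData (cs : CoxeterSystem M W) where
  finB : Finite B
  conn : DiagramConnected M
  infW : Infinite W
  /-- the subgroup `Λ` of translations -/
  Lam : Subgroup W
  hLam_mem : ∀ w : W, w ∈ Lam ↔ {x : W | IsConj w x}.Finite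
  hLam_normal : Lam.Normal
  hLam_comm : ∀ a ∈ Lam, ∀ b ∈ Lam, a * b = b * a
  hLam_index : Lam.FiniteIndex
  /-- `Λ` is free abelian of finite rank -/
  rank : ℕ
  freeIso : Lam ≃* Multiplicative (Fin rank → ℤ)
  /-- the hyperspecial vertex `s₀` -/
  s0 : W
  hs0_S : s0 ∈ Set.range cs.simple
  /-- `s₀` is hyperspecial: the projection `W → W/Λ` restricts to an isomorphism from the
  subgroup generated by `S − {s₀}` onto `W/Λ`. -/
  hs0_hyper : ∀ w : W, ∃! u : W,
    u ∈ Subgroup.closure (Set.range cs.simple \ {s0}) ∧ w * u⁻¹ ∈ Lam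
  hWJ_fin : (Subgroup.closure (Set.range cs.simple \ {s0}) : Set W).Finite
  /-- the longest element `w_J` of `W_J` -/
  wJ : W
  hwJ_mem : wJ ∈ Subgroup.closure (Set.range cs.simple \ {s0})
  hwJ_max : ∀ u ∈ Subgroup.closure (Set.range cs.simple \ {s0}), cs.length u ≤ cs.length wJ
  /-- the involution `*` of `W` -/
  st : MulAut W
  hst_inv : ∀ w : W, st (st w) = w
  hst_J : ∀ u ∈ Subgroup.closure (Set.range cs.simple \ {s0}), st u = wJ * u * wJ
  hst_Lam : ∀ l ∈ Lam, st l = (wJ * l * wJ⁻¹)⁻¹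
  hst_S : ∀ s ∈ Set.range cs.simple, st s ∈ Set.range cs.simple
  /-- lower Bruhat intervals are finite -/
  hBruhat_fin : ∀ w : W, {y : W | BruhatLE cs y w}.Finite
  /-- the projection `W → W_J` along `Λ` (`w ↦ w̄`) -/
  pr : W → W
  hpr : ∀ w : W, pr w ∈ Subgroup.closure (Set.range cs.simple \ {s0}) ∧ w * (pr w)⁻¹ ∈ Lam
  /-- the conjugation action of `W` on `Λ_ℚ ≅ ℚ^rank` -/
  rho : W → ((Fin rank → ℚ) →ₗ[ℚ] (Fin rank → ℚ))
  hrho : ∀ (w : W) (l : Lam),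
    rho w (fun i => ((Multiplicative.toAdd (freeIso l)) i : ℚ)) =
      fun i => ((Multiplicative.toAdd
        (freeIso ⟨w * (l : W) * w⁻¹, hLam_normal.conj_mem _ l.2 w⟩)) i : ℚ)

namespace AffineData

variable {cs : CoxeterSystem M W} (D : AffineData cs)

/-- The set `J = S − {s₀}`. -/
def Jset : Set W := Set.range cs.simple \ {D.s0}

/-- The finite Weyl group `W_J`. -/
def WJ : Subgroup W := Subgroup.closure D.Jset

/-- `λ ∈ Λ` is a dominant translation (`λ ∈ Λ⁺`). -/
def IsDominant (l : W) : Prop :=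
  l ∈ D.Lam ∧ cs.length (l * D.wJ) = cs.length l + cs.length D.wJ

/-- The embedding `Λ → Λ_ℚ = ℚ^rank`. -/
def iota (l : D.Lam) : Fin D.rank → ℚ :=
  fun i => ((Multiplicative.toAdd (D.freeIso l)) i : ℚ)

/-- `e(A)`: the dimension of the `(−1)`-eigenspace of a linear endomorphism `A` of `Λ_ℚ`. -/
def eNeg (f : (Fin D.rank → ℚ) →ₗ[ℚ] (Fin D.rank → ℚ)) : ℕ :=
  Module.finrank ℚ (Module.End.eigenspace (f : Module.End ℚ (Fin D.rank → ℚ)) (-1))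

/-- The map `A_u : λ ↦ ᵘ(λ*) = −(ᵘʷᴶλ)` on `Λ_ℚ`, for `u ∈ W_J`. -/
def Amap (u : W) : (Fin D.rank → ℚ) →ₗ[ℚ] (Fin D.rank → ℚ) := - D.rho (u * D.wJ)

/-- The invariant `φ(w) = e(A_{w̄}) − e(A_e)` for `w ∈ I_*`. -/
def phi (w : W) : ℤ := (D.eNeg (D.Amap (D.pr w)) : ℤ) - (D.eNeg (D.Amap 1) : ℤ)

/-- The double coset `W_J x W_J`. -/
def DCoset (x : W) : Set W := {y : W | ∃ u ∈ D.WJ, ∃ v ∈ D.WJ, y = u * x * v}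

/-- The set `H = J ∩ bJb⁻¹`. -/
def Hset (b : W) : Set W := D.Jset ∩ ((fun s => b * s * b⁻¹) '' D.Jset)

/-- The set `H* ⊆ J`, image of `H` under `*`. -/
def Hstar (b : W) : Set W := (⇑D.st) '' D.Hset b

/-- The subgroup `W_{H*}` generated by `H*`. -/
def WHstar (b : W) : Subgroup W := Subgroup.closure (D.Hstar b)

/-- The reflection representation `R'` of `W_{H*}`, as a subspace of `Λ_ℚ`:
the span of the vectors `λ − ˢλ` for `λ ∈ Λ`, `s ∈ H*`. -/
def Rprime (b : W) : Submodule ℚ (Fin D.rank → ℚ) :=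
  Submodule.span ℚ
    {v : Fin D.rank → ℚ | ∃ l : D.Lam, ∃ s ∈ D.Hstar b,
      v = D.iota l - D.iota ⟨s * (l : W) * s⁻¹, D.hLam_normal.conj_mem _ l.2 s⟩}

/-- `e'(A)`: the dimension of the `(−1)`-eigenspace of an endomorphism `A` of `R'`. -/
def eNeg' {b : W} (f : ↥(D.Rprime b) →ₗ[ℚ] ↥(D.Rprime b)) : ℕ :=
  Module.finrank ℚ (Module.End.eigenspace (f : Module.End ℚ ↥(D.Rprime b)) (-1))

/-- `φ'(z) = e'(B_z) − e'(B_e)`, where `B_u : x ↦ −u·(w_{H*}·x)` on `R'`; here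
`rho'` is the conjugation action of `W_{H*}` on `R'` and `wHs` is the longest element
of `W_{H*}`. -/
def phiP {b : W} (rho' : W → (↥(D.Rprime b) →ₗ[ℚ] ↥(D.Rprime b))) (wHs z : W) : ℤ :=
  (D.eNeg' (-(rho' (z * wHs))) : ℤ) - (D.eNeg' (-(rho' wHs)) : ℤ)

/-- Membership in `A_Λ ⊆ A = Aut(W,S)`: automorphisms acting on `Λ` as conjugation by some
element of `W_J`. -/
def InALam (a : MulAut W) : Prop :=
  IsDiagAut cs a ∧ ∃ w ∈ D.WJ, ∀ l ∈ D.Lam, a l = w * l * w⁻¹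

/-- Membership in the coset `A_Λ* = {a ∘ * : a ∈ A_Λ}`. -/
def InALamStar (c : MulAut W) : Prop := ∃ a : MulAut W, D.InALam a ∧ c = a * D.st

/-- The double coset `W_J x W_J^◇`, where `W_J^◇` is the subgroup generated by
`J^◇ = S − {s₁}`. -/
def DCosetDia (s1 : W) (x : W) : Set W :=
  {y : W | ∃ u ∈ D.WJ, ∃ v ∈ Subgroup.closure (Set.range cs.simple \ {s1}), y = u * x * v}


end AffineData

/-! ## The Hecke algebra, the Lusztig–Vogan module, and the polynomials `P`, `P^σ` -/

/-- The Hecke algebra of `(W,S)` over `ℚ(q)` (modelled on functions `W → ℚ(q)`, with basis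
`TT w = T_w`), together with its bar involution, and the Kazhdan–Lusztig polynomials
`P_{y,w} ∈ ℤ[q]` characterized by their defining properties. -/
structure HeckeData (cs : CoxeterSystem M W) where
  /-- the involution `q ↦ q⁻¹` of `ℚ(q)` -/
  barK : K →+* K
  hbarK_X : barK qK = qK⁻¹
  hbarK_inv : ∀ x, barK (barK x) = x
  /-- the multiplication of the Hecke algebra -/
  mulH : (W → K) →ₗ[K] (W → K) →ₗ[K] (W → K)
  hmul_assoc : ∀ x y z : W → K, mulH (mulH x y) z = mulH x (mulH y z)
  hmul_one : ∀ x : W → K, mulH (TT 1) x = x ∧ mulH x (TT 1) = x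
  hmul_TT : ∀ u v : W, cs.length (u * v) = cs.length u + cs.length v →
    mulH (TT u) (TT v) = TT (u * v)
  hmul_Ts : ∀ s ∈ Set.range cs.simple,
    mulH (TT s) (TT s) = (qK - 1) • TT s + qK • TT (1 : W)
  /-- the bar involution of the Hecke algebra: the ring involution with `q ↦ q⁻¹`,
  `T_w ↦ (T_{w⁻¹})⁻¹` -/
  barH : (W → K) →+ (W → K)
  hbarH_inv : ∀ x, barH (barH x) = x
  hbarH_smul : ∀ (c : K) (x : W → K), barH (c • x) = barK c • barH x
  hbarH_mul : ∀ x y : W → K, barH (mulH x y) = mulH (barH x) (barH y)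
  hbarH_T : ∀ w : W, mulH (barH (TT w)) (TT w⁻¹) = TT (1 : W) ∧
    mulH (TT w⁻¹) (barH (TT w)) = TT (1 : W)
  /-- the Kazhdan–Lusztig polynomials `P_{y,w}` -/
  P : W → W → Polynomial ℤ
  hP_supp : ∀ y w : W, ¬ BruhatLE cs y w → P y w = 0
  hP_diag : ∀ w : W, P w w = 1
  hP_deg : ∀ y w : W, BruhatLE cs y w → y ≠ w →
    2 * (P y w).natDegree + 1 ≤ cs.length w - cs.length y
  hP_dual : ∀ w : W,
    (qK ^ cs.length w) • barH (fun y => if BruhatLE cs y w then toK (P y w) else 0)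
      = fun y => if BruhatLE cs y w then toK (P y w) else 0

/-- The Lusztig–Vogan module `M` over the Hecke algebra `H'` with parameter `q²`, attached to
a length-preserving involutive automorphism `star` of `(W,S)`, together with its bar
involution, and the polynomials `P^σ_{y,w} ∈ ℤ[q]` (for `y, w ∈ I_*`) characterized by their
defining properties.  Both `H'` and `M` are modelled on functions `W → ℚ(q)`; the basis
element `a_w` of `M` (for `w ∈ I_*`) is `TT w`. -/
structure LVData (cs : CoxeterSystem M W) (star : MulAut W) where
  /-- the involution `q ↦ q⁻¹` of `ℚ(q)` -/
  barK : K →+* K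
  hbarK_X : barK qK = qK⁻¹
  hbarK_inv : ∀ x, barK (barK x) = x
  /-- the multiplication of the Hecke algebra `H'` with parameter `q²` -/
  mulH' : (W → K) →ₗ[K] (W → K) →ₗ[K] (W → K)
  hmul'_assoc : ∀ x y z : W → K, mulH' (mulH' x y) z = mulH' x (mulH' y z)
  hmul'_one : ∀ x : W → K, mulH' (TT 1) x = x ∧ mulH' x (TT 1) = x
  hmul'_TT : ∀ u v : W, cs.length (u * v) = cs.length u + cs.length v →
    mulH' (TT u) (TT v) = TT (u * v)
  hmul'_Ts : ∀ s ∈ Set.range cs.simple,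
    mulH' (TT s) (TT s) = (qK ^ 2 - 1) • TT s + (qK ^ 2) • TT (1 : W)
  /-- the bar involution of `H'` -/
  barH' : (W → K) →+ (W → K)
  hbarH'_inv : ∀ x, barH' (barH' x) = x
  hbarH'_smul : ∀ (c : K) (x : W → K), barH' (c • x) = barK c • barH' x
  hbarH'_mul : ∀ x y : W → K, barH' (mulH' x y) = mulH' (barH' x) (barH' y)
  hbarH'_T : ∀ w : W, mulH' (barH' (TT w)) (TT w⁻¹) = TT (1 : W) ∧
    mulH' (TT w⁻¹) (barH' (TT w)) = TT (1 : W)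
  /-- the action of `H'` on the module `M` -/
  actM : (W → K) →ₗ[K] (W → K) →ₗ[K] (W → K)
  hact_one : ∀ m : W → K, actM (TT 1) m = m
  hact_mul : ∀ (h h' : W → K) (m : W → K), actM (mulH' h h') m = actM h (actM h' m)
  hact1 : ∀ s ∈ Set.range cs.simple, ∀ w : W, star w = w⁻¹ →
    s * w = w * star s → cs.length w < cs.length (s * w) →
    actM (TT s) (TT w) = qK • TT w + (qK + 1) • TT (s * w)
  hact2 : ∀ s ∈ Set.range cs.simple, ∀ w : W, star w = w⁻¹ →
    s * w = w * star s → cs.length (s * w) < cs.length w →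
    actM (TT s) (TT w) = (qK ^ 2 - qK - 1) • TT w + (qK ^ 2 - qK) • TT (s * w)
  hact3 : ∀ s ∈ Set.range cs.simple, ∀ w : W, star w = w⁻¹ →
    s * w ≠ w * star s → cs.length w < cs.length (s * w) →
    actM (TT s) (TT w) = TT (s * w * star s)
  hact4 : ∀ s ∈ Set.range cs.simple, ∀ w : W, star w = w⁻¹ →
    s * w ≠ w * star s → cs.length (s * w) < cs.length w →
    actM (TT s) (TT w) = (qK ^ 2 - 1) • TT w + (qK ^ 2) • TT (s * w * star s)
  /-- the bar involution of the module `M` -/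
  barM : (W → K) →+ (W → K)
  hbarM_inv : ∀ m : W → K, barM (barM m) = m
  hbarM_smul : ∀ (c : K) (m : W → K), barM (c • m) = barK c • barM m
  hbarM_act : ∀ (h m : W → K), barM (actM h m) = actM (barH' h) (barM m)
  hbarM_one : barM (TT 1) = TT (1 : W)
  /-- the Lusztig–Vogan polynomials `P^σ_{y,w}` -/
  Psig : W → W → Polynomial ℤ
  hPsig_supp : ∀ y w : W, ¬ (BruhatLE cs y w ∧ star y = y⁻¹) → Psig y w = 0
  hPsig_diag : ∀ w : W, star w = w⁻¹ → Psig w w = 1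
  hPsig_deg : ∀ y w : W, star w = w⁻¹ → star y = y⁻¹ → BruhatLE cs y w → y ≠ w →
    2 * (Psig y w).natDegree + 1 ≤ cs.length w - cs.length y
  hPsig_dual : ∀ w : W, star w = w⁻¹ →
    (qK ^ (2 * cs.length w)) •
        barM (fun y => if BruhatLE cs y w ∧ star y = y⁻¹ then toK (Psig y w) else 0)
      = fun y => if BruhatLE cs y w ∧ star y = y⁻¹ then toK (Psig y w) else 0

/-! ## The `Z`-polynomials -/

/-- `Z_w(q) = Σ_{y ≤ w} P_{y,w}(q) q^{ℓ(y)}`. -/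
def Zpoly (cs : CoxeterSystem M W) (HD : HeckeData cs) (w : W) : K :=
  ∑ᶠ y : W, if BruhatLE cs y w then toK (HD.P y w) * qK ^ cs.length y else 0

/-- `Z_w(−q) = Σ_{y ≤ w} P_{y,w}(−q) (−q)^{ℓ(y)}`. -/
def ZpolyNeg (cs : CoxeterSystem M W) (HD : HeckeData cs) (w : W) : K :=
  ∑ᶠ y : W, if BruhatLE cs y w then atNegQ (HD.P y w) * (-qK) ^ cs.length y else 0

/-- `Z^σ_w(q) = Σ_{y ≤ w, y ∈ I_*} P^σ_{y,w}(q) q^{ℓ(y)} ((q−1)/(q+1))^{φ(y)}`. -/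
def Zsig (cs : CoxeterSystem M W) (D : AffineData cs) (LD : LVData cs D.st) (w : W) : K :=
  ∑ᶠ y : W, if BruhatLE cs y w ∧ D.st y = y⁻¹ then
    toK (LD.Psig y w) * qK ^ cs.length y * ((qK - 1) / (qK + 1)) ^ D.phi y else 0
/-! ## Geometric representation -/

/-- Cartan-type coefficients `2 B(α_i, α_j)`. -/
def cst (M : CoxeterMatrix B) (i j : B) : ℝ := -2 * Real.cos (Real.pi / M i j)

theorem cst_symm (i j : B) : cst M i j = cst M j i := by
  unfold cst; rw [M.symmetric]

theorem cst_self (i : B) : cst M i i = 2 := by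
  simp [cst]

/-- Simple roots. -/
def al (i : B) : B → ℝ := Pi.single i 1

/-- Simple coroots. -/
def fd (M : CoxeterMatrix B) [Fintype B] (i : B) : Module.Dual ℝ (B → ℝ) :=
  ∑ j, cst M j i • LinearMap.proj j

theorem fd_apply [Fintype B] (i : B) (v : B → ℝ) : fd M i v = ∑ j, cst M j i * v j := by
  simp [fd]

theorem fd_al [Fintype B] (i j : B) : fd M i (al j) = cst M j i := by
  simp [fd_apply, al, Pi.single_apply]

theorem fd_al_self [Fintype B] (i : B) : fd M i (al i) = 2 := by
  rw [fd_al, cst_self]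

theorem S_even_zero (p : ℕ) (hp : 2 ≤ p) (t : ℝ) (ht : t = 2 * Real.cos (Real.pi / p)) :
    (Polynomial.Chebyshev.S ℝ ((p : ℤ) - 1)).eval t = 0 := by
  have h := Polynomial.Chebyshev.S_two_mul_real_cos (Real.pi / p) ((p : ℤ) - 1)
  have hp0 : (p : ℝ) ≠ 0 := by positivity
  have hs : Real.sin (Real.pi / p) ≠ 0 := by
    apply ne_of_gt
    apply Real.sin_pos_of_pos_of_lt_pi (by positivity)
    apply div_lt_self Real.pi_pos
    exact_mod_cast hp
  rw [← ht] at h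
  have : ((((p : ℤ) - 1 : ℤ) : ℝ) + 1) * (Real.pi / p) = Real.pi := by
    push_cast; field_simp; ring
  rw [this, Real.sin_pi] at h
  exact (mul_eq_zero.1 h).resolve_right hs

theorem S_odd_zero (p : ℕ) (hp : 1 ≤ p) (t : ℝ) (ht : t = 2 * Real.cos (2 * Real.pi / (2 * p + 1))) :
    (Polynomial.Chebyshev.S ℝ (p : ℤ)).eval t + (Polynomial.Chebyshev.S ℝ ((p : ℤ) - 1)).eval t = 0 := by
  set θ := 2 * Real.pi / (2 * p + 1) with hθ
  have h := Polynomial.Chebyshev.S_two_mul_real_cos θ ((p : ℤ) - 1)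
  have h' := Polynomial.Chebyshev.S_two_mul_real_cos θ (p : ℤ)
  have hp' : (1 : ℝ) ≤ p := by exact_mod_cast hp
  have hs : Real.sin θ ≠ 0 := by
    apply ne_of_gt
    apply Real.sin_pos_of_pos_of_lt_pi (by positivity)
    rw [hθ, div_lt_iff₀ (by positivity)]
    nlinarith [Real.pi_pos]
  rw [← ht] at h h'
  have e1 : ((((p : ℤ) - 1 : ℤ) : ℝ) + 1) * θ = Real.pi - θ / 2 := by
    rw [hθ]; push_cast; field_simp; ring
  have e2 : ((((p : ℤ) : ℤ) : ℝ) + 1) * θ = Real.pi + θ / 2 := by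
    rw [hθ]; push_cast; field_simp; ring
  rw [e1, Real.sin_pi_sub] at h
  rw [e2, add_comm, Real.sin_add_pi] at h'
  have : ((Polynomial.Chebyshev.S ℝ (p : ℤ)).eval t
    + (Polynomial.Chebyshev.S ℝ ((p : ℤ) - 1)).eval t) * Real.sin θ = 0 := by
    rw [add_mul, h, h']; ring
  exact (mul_eq_zero.1 this).resolve_right hs

/-- Simple reflections as linear equivalences. -/
def rfl' (M : CoxeterMatrix B) [Fintype B] (i : B) : (B → ℝ) ≃ₗ[ℝ] (B → ℝ) :=
  Module.reflection (fd_al_self (M := M) i)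

theorem rfl'_apply [Fintype B] (i : B) (v : B → ℝ) : rfl' M i v = v - fd M i v • al i := by
  simp [rfl', Module.reflection_apply]

theorem rfl'_braid [Fintype B] (i j : B) : (rfl' M i * rfl' M j) ^ M i j = 1 := by
  by_cases hij : i = j
  · subst hij
    rw [M.diagonal, pow_one]
    ext1 v
    exact Module.involutive_reflection (fd_al_self (M := M) i) v
  have h1 := M.off_diagonal i j hij
  set m := M i j with hm
  have hmm : M i j = m := hm.symm
  have hmm' : M j i = m := by rw [M.symmetric]
  have ht : (2 * Real.cos (2 * Real.pi / m)) = fd M i (al j) * fd M j (al i) - 2 := by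
    rw [fd_al, fd_al, cst, cst, hmm, hmm']
    rw [show 2 * Real.pi / m = 2 * (Real.pi / m) by ring, Real.cos_two_mul]; ring
  ext1 v
  have key := Module.reflection_mul_reflection_pow_apply (fd_al_self (M := M) i)
    (fd_al_self (M := M) j) m v _ ht
  unfold rfl'
  rw [key]
  show _ = v
  rcases Nat.even_or_odd' m with ⟨p, hp | hp⟩
  · rcases Nat.lt_or_ge p 2 with h2 | h2
    · interval_cases p
      · simp [hp]
      · have hm2 : m = 2 := by omega
        have c1 : cst M i j = 0 := by simp [cst, hmm, hm2]
        have c2 : cst M j i = 0 := by simp [cst, hmm', hm2]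
        simp only [hm2, fd_al, c1, c2]
        norm_num
        abel
    · have e1 : ((m : ℤ) - 2) / 2 = (p : ℤ) - 1 := by omega
      have e2 : ((m : ℤ) - 1) / 2 = (p : ℤ) - 1 := by omega
      have hh := S_even_zero p h2 (2 * Real.cos (2 * Real.pi / m)) (by
        rw [hp]; push_cast; congr 2; field_simp)
      rw [e1, e2, hh]; simp
  · rcases Nat.lt_or_ge p 1 with h2 | h2
    · omega
    · have e1 : ((m : ℤ) - 2) / 2 = (p : ℤ) - 1 := by omega
      have e2 : ((m : ℤ) - 1) / 2 = (p : ℤ) := by omega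
      have e3 : ((m : ℤ) - 3) / 2 = (p : ℤ) - 1 := by omega
      have e4 : (m : ℤ) / 2 = (p : ℤ) := by omega
      have hh := S_odd_zero p h2 (2 * Real.cos (2 * Real.pi / m)) (by
        rw [hp]; push_cast; rfl)
      rw [e1, e2, e3, e4, hh]; simp

/-- The geometric representation. -/
def rho (cs : CoxeterSystem M W) [Fintype B] : W →* ((B → ℝ) ≃ₗ[ℝ] (B → ℝ)) :=
  cs.lift ⟨rfl' M, fun i j => rfl'_braid i j⟩

theorem rho_simple (cs : CoxeterSystem M W) [Fintype B] (i : B) :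
    rho cs (cs.simple i) = rfl' M i := by
  unfold rho; exact cs.lift_apply_simple _ i

theorem rho_simple_apply (cs : CoxeterSystem M W) [Fintype B] (i : B) (v : B → ℝ) :
    rho cs (cs.simple i) v = v - fd M i v • al i := by
  rw [rho_simple, rfl'_apply]

theorem rho_mul_apply (cs : CoxeterSystem M W) [Fintype B] (x y : W) (v : B → ℝ) :
    rho cs (x * y) v = rho cs x (rho cs y v) := by
  rw [map_mul]; rfl

theorem rho_simple_self (cs : CoxeterSystem M W) [Fintype B] (i : B) :
    rho cs (cs.simple i) (al i) = - al i := by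
  rw [rho_simple_apply, fd_al_self, two_smul]; abel

/-- Dihedral coefficient sequence. -/
def dih (c : ℝ) : ℕ → ℝ
  | 0 => 0
  | 1 => 1
  | (k + 2) => c * dih c (k + 1) - dih c k

theorem dih_sin (θ : ℝ) (k : ℕ) :
    dih (2 * Real.cos θ) k * Real.sin θ = Real.sin (k * θ) ∧
    dih (2 * Real.cos θ) (k + 1) * Real.sin θ = Real.sin ((k + 1) * θ) := by
  induction k with
  | zero => simp [dih]
  | succ k ih =>
    obtain ⟨h1, h2⟩ := ih
    refine ⟨by push_cast; exact h2, ?_⟩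
    rw [dih, sub_mul, mul_assoc, h2, h1]
    push_cast
    have e1 : ((k : ℝ) + 1 + 1) * θ = (k + 1) * θ + θ := by ring
    have e2 : (k : ℝ) * θ = (k + 1) * θ - θ := by ring
    rw [e1, e2, Real.sin_add, Real.sin_sub]; ring

theorem dih_two (k : ℕ) : dih 2 k = k ∧ dih 2 (k + 1) = k + 1 := by
  induction k with
  | zero => simp [dih]
  | succ k ih =>
    refine ⟨by push_cast; exact ih.2, ?_⟩
    rw [dih, ih.1, ih.2]; push_cast; ring

theorem dih_nonneg (m k : ℕ) (h1 : m ≠ 1) (h : m ≠ 0 → k ≤ m) :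
    0 ≤ dih (2 * Real.cos (Real.pi / m)) k := by
  rcases Nat.eq_zero_or_pos m with h0 | h0
  · subst h0; simp [(dih_two k).1]
  have hm : 2 ≤ m := by omega
  have hm' : (2 : ℝ) ≤ m := by exact_mod_cast hm
  have hk : (k : ℝ) ≤ m := by exact_mod_cast h (by omega)
  have hs : 0 < Real.sin (Real.pi / m) := by
    apply Real.sin_pos_of_pos_of_lt_pi (by positivity)
    apply div_lt_self Real.pi_pos; linarith
  have h2 : 0 ≤ Real.sin (k * (Real.pi / m)) := by
    apply Real.sin_nonneg_of_nonneg_of_le_pi (by positivity)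
    rw [← mul_div_assoc, div_le_iff₀ (by positivity)]
    nlinarith [Real.pi_pos]
  rw [← (dih_sin _ k).1] at h2
  exact nonneg_of_mul_nonneg_left h2 hs

theorem rho_alt (cs : CoxeterSystem M W) [Fintype B] (i j : B) (k : ℕ) :
    rho cs (cs.wordProd (CoxeterSystem.alternatingWord i j k)) (al i)
      = dih (- cst M i j) (k + 1) • al (if Even k then i else j)
        + dih (- cst M i j) k • al (if Even k then j else i) := by
  induction k with
  | zero => simp [CoxeterSystem.alternatingWord, dih]
  | succ k ih =>
    rw [CoxeterSystem.alternatingWord_succ', cs.wordProd_cons, rho_mul_apply, ih, dih]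
    have hs := cst_symm (M := M) i j
    by_cases hk : Even k
    · have hk' : ¬ Even (k + 1) := by simpa [Nat.even_add_one] using hk
      simp only [hk, hk', if_true, if_false, map_add, map_smul, rho_simple_self]
      rw [rho_simple_apply, fd_al]
      module
    · have hk' : Even (k + 1) := by simpa [Nat.even_add_one] using hk
      simp only [hk, hk', if_true, if_false, map_add, map_smul, rho_simple_self]
      rw [rho_simple_apply, fd_al, ← hs]
      module

theorem rho_pos (cs : CoxeterSystem M W) [Fintype B] : ∀ (n : ℕ) (w : W) (i : B),
    cs.length w = n → ¬ cs.IsRightDescent w i → 0 ≤ rho cs w (al i) := by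
  intro n
  induction n using Nat.strong_induction_on with
  | _ n ih =>
  intro w i hn hi
  by_cases hw : w = 1
  · subst hw
    rw [map_one]
    show 0 ≤ al i
    exact Pi.single_nonneg.2 zero_le_one
  obtain ⟨j, hj⟩ := cs.exists_rightDescent_of_ne_one hw
  have hij : i ≠ j := by rintro rfl; exact hi hj
  let Q : ℕ → Prop := fun k => ∃ v, w = v * cs.wordProd (CoxeterSystem.alternatingWord i j k)
    ∧ cs.length w = cs.length v + k
  have hQ1 : Q 1 := by
    refine ⟨w * cs.simple j, ?_, ?_⟩
    · simp [CoxeterSystem.alternatingWord]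
    · rw [cs.isRightDescent_iff] at hj; exact hj.symm
  obtain ⟨k, hk1, ⟨v, hv, hl⟩, hmax⟩ : ∃ k, 1 ≤ k ∧ Q k ∧ ¬ Q (k + 1) := by
    by_contra hcon
    push Not at hcon
    have hall : ∀ k, Q (k + 1) := by
      intro k
      induction k with
      | zero => exact hQ1
      | succ k ihk => exact hcon (k + 1) (by omega) ihk
    obtain ⟨v, _, hl⟩ := hall (cs.length w)
    omega
  have hlet : ∀ x, (x = i ∨ x = j) → ¬ cs.IsRightDescent v x := by
    intro x hx hd
    rw [cs.isRightDescent_iff] at hd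
    by_cases hx1 : x = (if Even k then j else i)
    · apply hmax
      refine ⟨v * cs.simple x, ?_, by omega⟩
      rw [CoxeterSystem.alternatingWord_succ', cs.wordProd_cons, ← hx1, ← mul_assoc]
      simpa using hv
    · obtain ⟨k', rfl⟩ : ∃ k', k = k' + 1 := ⟨k - 1, by omega⟩
      have hx2 : x = (if Even k' then j else i) := by
        by_cases he : Even k'
        · have he' : ¬ Even (k' + 1) := by simpa [Nat.even_add_one] using he
          simp only [he, he', if_true, if_false] at hx1 ⊢
          tauto
        · have he' : Even (k' + 1) := by simpa [Nat.even_add_one] using he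
          simp only [he, he', if_true, if_false] at hx1 ⊢
          tauto
      rw [CoxeterSystem.alternatingWord_succ', cs.wordProd_cons, ← hx2, ← mul_assoc] at hv
      have h1 := cs.length_mul_le (v * cs.simple x)
        (cs.wordProd (CoxeterSystem.alternatingWord i j k'))
      have h2 := cs.length_wordProd_le (CoxeterSystem.alternatingWord i j k')
      rw [CoxeterSystem.length_alternatingWord] at h2
      rw [← hv] at h1
      omega
  have hkm : M i j ≠ 0 → k + 1 ≤ M i j := by
    intro h0
    have hred : cs.IsReduced (CoxeterSystem.alternatingWord i j k) := by
      have h1 := cs.length_mul_le v (cs.wordProd (CoxeterSystem.alternatingWord i j k))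
      have h2 := cs.length_wordProd_le (CoxeterSystem.alternatingWord i j k)
      rw [← hv] at h1
      rw [CoxeterSystem.length_alternatingWord] at h2
      unfold CoxeterSystem.IsReduced
      rw [CoxeterSystem.length_alternatingWord]
      omega
    have hle : k ≤ M i j := by
      by_contra hc
      exact cs.not_isReduced_alternatingWord i j h0 (not_le.1 hc) hred
    rcases Nat.lt_or_ge k (M i j) with h | h
    · exact h
    exfalso
    have hk : k = M i j := le_antisymm hle h
    apply hi
    have hb := cs.wordProd_braidWord_eq i j
    unfold CoxeterSystem.braidWord at hb
    have hb2 : cs.wordProd (CoxeterSystem.alternatingWord i j k)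
      = cs.wordProd (CoxeterSystem.alternatingWord j i k) := by
      rw [hk]; rw [hb, M.symmetric j i]
    rw [hb2] at hv
    obtain ⟨k', rfl⟩ : ∃ k', k = k' + 1 := ⟨k - 1, by omega⟩
    rw [CoxeterSystem.alternatingWord_succ, cs.wordProd_concat, ← mul_assoc] at hv
    have : w * cs.simple i = v * cs.wordProd (CoxeterSystem.alternatingWord i j k') := by
      rw [hv]; simp
    unfold CoxeterSystem.IsRightDescent
    rw [this]
    have h1 := cs.length_mul_le v (cs.wordProd (CoxeterSystem.alternatingWord i j k'))
    have h2 := cs.length_wordProd_le (CoxeterSystem.alternatingWord i j k')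
    rw [CoxeterSystem.length_alternatingWord] at h2
    omega
  have p1 := ih _ (by omega) v i rfl (hlet i (Or.inl rfl))
  have p2 := ih _ (by omega) v j rfl (hlet j (Or.inr rfl))
  have hc : - cst M i j = 2 * Real.cos (Real.pi / M i j) := by unfold cst; ring
  have d1 : 0 ≤ dih (- cst M i j) k := by
    rw [hc]; exact dih_nonneg _ _ (M.off_diagonal i j hij) (fun h => by have := hkm h; omega)
  have d2 : 0 ≤ dih (- cst M i j) (k + 1) := by
    rw [hc]; exact dih_nonneg _ _ (M.off_diagonal i j hij) hkm
  rw [hv, rho_mul_apply, rho_alt, map_add, map_smul, map_smul]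
  apply add_nonneg
  · apply smul_nonneg d2
    split_ifs <;> assumption
  · apply smul_nonneg d1
    split_ifs <;> assumption

/-! ## Consequences: parabolic subgroups, roots -/

section Par

variable (cs : CoxeterSystem M W) [Fintype B]

theorem al_nonneg (i : B) : 0 ≤ al i := Pi.single_nonneg.2 zero_le_one

theorem al_ne_zero (i : B) : al i ≠ 0 := by
  intro h
  have := congrFun h i
  simp [al] at this

theorem rho_ne_zero (w : W) {v : B → ℝ} (hv : v ≠ 0) : rho cs w v ≠ 0 := by
  simpa using hv

theorem rho_al_desc {w : W} {i : B} (h : cs.IsRightDescent w i) : rho cs w (al i) ≤ 0 := by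
  have h1 := (cs.isRightDescent_iff_not_isRightDescent_mul).1 h
  have h2 := rho_pos cs _ _ i rfl h1
  rw [rho_mul_apply, rho_simple_self, map_neg] at h2
  exact neg_nonneg.1 h2

theorem desc_iff {w : W} {i : B} : cs.IsRightDescent w i ↔ rho cs w (al i) ≤ 0 := by
  refine ⟨rho_al_desc cs, fun h => ?_⟩
  by_contra hc
  have h2 := rho_pos cs _ _ i rfl hc
  exact rho_ne_zero cs w (al_ne_zero i) (le_antisymm h h2)

theorem not_desc_iff {w : W} {i : B} : ¬ cs.IsRightDescent w i ↔ 0 ≤ rho cs w (al i) := by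
  refine ⟨rho_pos cs _ _ i rfl, fun h h1 => ?_⟩
  exact rho_ne_zero cs w (al_ne_zero i) (le_antisymm (rho_al_desc cs h1) h)

theorem rho_sign (w : W) (i : B) : 0 ≤ rho cs w (al i) ∨ rho cs w (al i) ≤ 0 := by
  by_cases h : cs.IsRightDescent w i
  · exact Or.inr (rho_al_desc cs h)
  · exact Or.inl ((not_desc_iff cs).1 h)

theorem eq_one_of_no_desc {w : W} (h : ∀ i, 0 ≤ rho cs w (al i)) : w = 1 := by
  by_contra hw
  obtain ⟨j, hj⟩ := cs.exists_rightDescent_of_ne_one hw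
  exact (not_desc_iff cs).2 (h j) hj

theorem rho_inj {w : W} (h : ∀ v, rho cs w v = v) : w = 1 :=
  eq_one_of_no_desc cs fun i => by rw [h]; exact al_nonneg i

/-- The parabolic subgroup `W_J`. -/
def WP (J : Finset B) : Subgroup W := Subgroup.closure (cs.simple '' (J : Set B))

variable {cs}

theorem simple_mem_WP {J : Finset B} {j : B} (hj : j ∈ J) : cs.simple j ∈ WP cs J :=
  Subgroup.subset_closure ⟨j, hj, rfl⟩

theorem WP_mono {J I : Finset B} (h : J ⊆ I) : WP cs J ≤ WP cs I :=
  Subgroup.closure_mono (Set.image_mono h)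

theorem rho_off {J : Finset B} {w : W} (hw : w ∈ WP cs J) (v : B → ℝ) {i : B} (hi : i ∉ J) :
    rho cs w v i = v i := by
  induction hw using Subgroup.closure_induction generalizing v with
  | mem x hx =>
    obtain ⟨j, hj, rfl⟩ := hx
    rw [rho_simple_apply]
    have : i ≠ j := by rintro rfl; exact hi hj
    simp [al, this]
  | one => rw [map_one]; rfl
  | mul x y _ _ h1 h2 => rw [rho_mul_apply, h1, h2]
  | inv x _ h =>
    have := h (rho cs x⁻¹ v)
    rw [← rho_mul_apply, mul_inv_cancel, map_one] at this
    exact this.symm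

theorem al_off {J : Finset B} {j : B} (hj : j ∈ J) {i : B} (hi : i ∉ J) : al j i = 0 := by
  have : i ≠ j := by rintro rfl; exact hi hj
  simp [al, this]

theorem exists_desc {J : Finset B} {w : W} (hw : w ∈ WP cs J) (h1 : w ≠ 1) :
    ∃ j ∈ J, cs.IsRightDescent w j := by
  by_contra hc
  push Not at hc
  apply h1
  apply eq_one_of_no_desc cs
  intro i
  by_cases hi : i ∈ J
  · exact (not_desc_iff cs).1 (hc i hi)
  · rcases rho_sign cs w i with h | h
    · exact h
    · have h2 := h i
      rw [rho_off hw _ hi] at h2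
      simp [al] at h2
      linarith

theorem rho_nonneg_comb (x : W) (J : Finset B) (v : B → ℝ) (hv : 0 ≤ v) (hs : ∀ i, i ∉ J → v i = 0)
    (h : ∀ j ∈ J, 0 ≤ rho cs x (al j)) : 0 ≤ rho cs x v := by
  have : v = ∑ i, v i • al i := by
    ext k; simp [al, Pi.single_apply]
  rw [this, map_sum]
  apply Finset.sum_nonneg
  intro i _
  rw [map_smul]
  by_cases hi : i ∈ J
  · exact smul_nonneg (hv i) (h i hi)
  · rw [hs i hi, zero_smul]

theorem rho_nonpos_comb (x : W) (J : Finset B) (v : B → ℝ) (hv : 0 ≤ v) (hs : ∀ i, i ∉ J → v i = 0)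
    (h : ∀ j ∈ J, rho cs x (al j) ≤ 0) : rho cs x v ≤ 0 := by
  have : v = ∑ i, v i • al i := by
    ext k; simp [al, Pi.single_apply]
  rw [this, map_sum]
  apply Finset.sum_nonpos
  intro i _
  rw [map_smul]
  by_cases hi : i ∈ J
  · exact smul_nonpos_of_nonneg_of_nonpos (hv i) (h i hi)
  · rw [hs i hi, zero_smul]

theorem WP_induction {J : Finset B} {p : W → Prop} (one : p 1)
    (step : ∀ z ∈ WP cs J, ∀ j ∈ J, ¬ cs.IsRightDescent z j → p z → p (z * cs.simple j))
    {z : W} (hz : z ∈ WP cs J) : p z := by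
  induction hn : cs.length z using Nat.strong_induction_on generalizing z with
  | _ n ih =>
  by_cases h1 : z = 1
  · rw [h1]; exact one
  obtain ⟨j, hj, hd⟩ := exists_desc hz h1
  have hz' : z * cs.simple j ∈ WP cs J := mul_mem hz (simple_mem_WP hj)
  have hd' : ¬ cs.IsRightDescent (z * cs.simple j) j :=
    (cs.isRightDescent_iff_not_isRightDescent_mul).1 hd
  have := step _ hz' j hj hd' (ih _ (by rw [← hn]; exact hd) hz' rfl)
  simpa using this

theorem rho_al_off {J : Finset B} {z : W} (hz : z ∈ WP cs J) {j : B} (hj : j ∈ J) (i : B)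
    (hi : i ∉ J) : rho cs z (al j) i = 0 := by
  rw [rho_off hz _ hi, al_off hj hi]

theorem length_add {J : Finset B} {y : W} (hy : ∀ j ∈ J, ¬ cs.IsRightDescent y j) {z : W}
    (hz : z ∈ WP cs J) : cs.length (y * z) = cs.length y + cs.length z := by
  refine WP_induction (p := fun z => cs.length (y * z) = cs.length y + cs.length z)
    (by simp) ?_ hz
  intro z hz j hj hd ih
  have h1 : ¬ cs.IsRightDescent (y * z) j := by
    rw [not_desc_iff, rho_mul_apply]
    exact rho_nonneg_comb y J _ ((not_desc_iff cs).1 hd) (rho_al_off hz hj)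
      (fun j hj => (not_desc_iff cs).1 (hy j hj))
  rw [cs.not_isRightDescent_iff] at h1 hd
  rw [← mul_assoc]; omega

theorem length_sub {J : Finset B} {x : W} (hx : ∀ j ∈ J, cs.IsRightDescent x j) {z : W}
    (hz : z ∈ WP cs J) : cs.length (x * z) + cs.length z = cs.length x := by
  refine WP_induction (p := fun z => cs.length (x * z) + cs.length z = cs.length x)
    (by simp) ?_ hz
  intro z hz j hj hd ih
  have h1 : cs.IsRightDescent (x * z) j := by
    rw [desc_iff, rho_mul_apply]
    exact rho_nonpos_comb x J _ ((not_desc_iff cs).1 hd) (rho_al_off hz hj)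
      (fun j hj => (desc_iff cs).1 (hx j hj))
  rw [cs.isRightDescent_iff] at h1
  rw [cs.not_isRightDescent_iff] at hd
  rw [← mul_assoc]; omega

theorem exists_min (J : Finset B) (w : W) :
    ∃ z ∈ WP cs J, ∀ j ∈ J, ¬ cs.IsRightDescent (w * z) j := by
  let S : Set ℕ := {n | ∃ z ∈ WP cs J, cs.length (w * z) = n}
  have hS : S.Nonempty := ⟨_, 1, one_mem _, rfl⟩
  obtain ⟨z, hz, hl⟩ := Nat.sInf_mem hS
  refine ⟨z, hz, fun j hj hd => ?_⟩
  have : cs.length (w * z * cs.simple j) ∈ S :=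
    ⟨z * cs.simple j, mul_mem hz (simple_mem_WP hj), by rw [mul_assoc]⟩
  have h2 := Nat.sInf_le this
  unfold CoxeterSystem.IsRightDescent at hd
  omega

theorem min_unique {J : Finset B} {y u : W} (hy : ∀ j ∈ J, ¬ cs.IsRightDescent y j)
    (hu : u ∈ WP cs J) (hyu : ∀ j ∈ J, ¬ cs.IsRightDescent (y * u) j) : u = 1 := by
  have h1 := length_add hy hu
  have h2 := length_add hyu (inv_mem hu)
  rw [mul_inv_cancel_right, cs.length_inv] at h2
  exact cs.length_eq_zero_iff.1 (by omega)

theorem max_unique {I : Finset B} {x y : W} (hx : x ∈ WP cs I) (hy : y ∈ WP cs I)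
    (dx : ∀ j ∈ I, cs.IsRightDescent x j) (dy : ∀ j ∈ I, cs.IsRightDescent y j) : x = y := by
  have h1 := length_sub dx (mul_mem (inv_mem hx) hy)
  have h2 := length_sub dy (mul_mem (inv_mem hy) hx)
  rw [mul_inv_cancel_left] at h1 h2
  have : x⁻¹ * y = 1 := cs.length_eq_zero_iff.1 (by omega)
  exact inv_mul_eq_one.1 this

theorem desc_of_max {I : Finset B} {x : W} (hx : x ∈ WP cs I)
    (hm : ∀ u ∈ WP cs I, cs.length u ≤ cs.length x) : ∀ j ∈ I, cs.IsRightDescent x j := by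
  intro j hj
  by_contra hc
  rw [cs.not_isRightDescent_iff] at hc
  have := hm _ (mul_mem hx (simple_mem_WP hj))
  omega

theorem exists_max (I : Finset B) [Finite (WP cs I)] :
    ∃ x ∈ WP cs I, ∀ j ∈ I, cs.IsRightDescent x j := by
  obtain ⟨x, hx⟩ := Finite.exists_max (fun u : WP cs I => cs.length (u : W))
  exact ⟨x, x.2, desc_of_max x.2 fun u hu => hx ⟨u, hu⟩⟩

/-- The invariant bilinear form. -/
def bf (M : CoxeterMatrix B) (u v : B → ℝ) : ℝ := ∑ i, u i * fd M i v

theorem bf_al_left (i : B) (v : B → ℝ) : bf M (al i) v = fd M i v := by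
  simp [bf, al, Pi.single_apply]

theorem bf_symm (u v : B → ℝ) : bf M u v = bf M v u := by
  simp only [bf, fd_apply, Finset.mul_sum]
  rw [Finset.sum_comm]
  refine Finset.sum_congr rfl fun i _ => Finset.sum_congr rfl fun j _ => ?_
  rw [cst_symm]; ring

theorem bf_sub_left (u u' v : B → ℝ) : bf M (u - u') v = bf M u v - bf M u' v := by
  simp [bf, sub_mul, Finset.sum_sub_distrib]

theorem bf_smul_left (c : ℝ) (u v : B → ℝ) : bf M (c • u) v = c * bf M u v := by
  simp [bf, Finset.mul_sum, mul_assoc]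

theorem bf_sub_right (u u' v : B → ℝ) : bf M v (u - u') = bf M v u - bf M v u' := by
  rw [bf_symm, bf_sub_left, bf_symm u, bf_symm u']

theorem bf_smul_right (c : ℝ) (u v : B → ℝ) : bf M u (c • v) = c * bf M u v := by
  rw [bf_symm, bf_smul_left, bf_symm]

theorem bf_rho (w : W) (u v : B → ℝ) : bf M (rho cs w u) (rho cs w v) = bf M u v := by
  induction w using cs.simple_induction_left generalizing u v with
  | one => rw [map_one]; rfl
  | mul_simple_left w i ih =>
    rw [rho_mul_apply, rho_mul_apply, ← ih u v]
    generalize rho cs w u = u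
    generalize rho cs w v = v
    rw [rho_simple_apply, rho_simple_apply]
    simp only [bf_sub_left, bf_sub_right, bf_smul_left, bf_smul_right, bf_al_left, fd_al_self]
    rw [bf_symm u (al i), bf_al_left]; ring

theorem bf_root (w : W) (i : B) : bf M (rho cs w (al i)) (rho cs w (al i)) = 2 := by
  rw [bf_rho, bf_al_left, fd_al_self]

/-- Roots which are nonnegative multiples of each other coincide. -/
theorem root_smul {u v : B → ℝ} (hu : bf M u u = 2) (hv : bf M v v = 2) {c : ℝ} (hc : 0 ≤ c)
    (h : u = c • v) : u = v := by
  have : c * c = 1 := by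
    rw [h, bf_smul_left, bf_smul_right, hv] at hu
    linarith
  have h1 : c = 1 := by nlinarith
  rw [h, h1, one_smul]

variable (cs) in
/-- Positive roots of `W_I`. -/
def PhiS (I : Finset B) : Set (B → ℝ) :=
  {v | 0 ≤ v ∧ ∃ w ∈ WP cs I, ∃ i ∈ I, v = rho cs w (al i)}

theorem PhiS_finite (I : Finset B) [Finite (WP cs I)] : (PhiS cs I).Finite := by
  have : (Set.range (fun p : WP cs I × B => rho cs (p.1 : W) (al p.2))).Finite := Set.finite_range _
  refine this.subset ?_
  rintro v ⟨_, w, hw, i, _, rfl⟩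
  exact ⟨(⟨w, hw⟩, i), rfl⟩

variable (cs) in
/-- Positive roots of `W_I`. -/
def Phi (I : Finset B) [Finite (WP cs I)] : Finset (B → ℝ) := (PhiS_finite (cs := cs) I).toFinset

theorem mem_Phi {I : Finset B} [Finite (WP cs I)] {v : B → ℝ} :
    v ∈ Phi cs I ↔ 0 ≤ v ∧ ∃ w ∈ WP cs I, ∃ i ∈ I, v = rho cs w (al i) := by
  simp [Phi, PhiS]

theorem al_mem_Phi {I : Finset B} [Finite (WP cs I)] {i : B} (hi : i ∈ I) : al i ∈ Phi cs I :=
  mem_Phi.2 ⟨al_nonneg i, 1, one_mem _, i, hi, by rw [map_one]; rfl⟩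

theorem Phi_off {I : Finset B} [Finite (WP cs I)] {v : B → ℝ} (hv : v ∈ Phi cs I) (i : B)
    (hi : i ∉ I) : v i = 0 := by
  obtain ⟨_, w, hw, j, hj, rfl⟩ := mem_Phi.1 hv
  exact rho_al_off hw hj i hi

theorem Phi_bf {I : Finset B} [Finite (WP cs I)] {v : B → ℝ} (hv : v ∈ Phi cs I) :
    bf M v v = 2 := by
  obtain ⟨_, w, hw, j, hj, rfl⟩ := mem_Phi.1 hv
  exact bf_root w j

theorem Phi_ne_zero {I : Finset B} [Finite (WP cs I)] {v : B → ℝ} (hv : v ∈ Phi cs I) :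
    v ≠ 0 := by
  obtain ⟨_, w, hw, j, hj, rfl⟩ := mem_Phi.1 hv
  exact rho_ne_zero cs w (al_ne_zero j)

theorem Phi_sign {I : Finset B} [Finite (WP cs I)] {v : B → ℝ} (hv : v ∈ Phi cs I) (x : W)
    : 0 ≤ rho cs x v ∨ rho cs x v ≤ 0 := by
  obtain ⟨_, w, hw, j, hj, rfl⟩ := mem_Phi.1 hv
  rw [← rho_mul_apply]; exact rho_sign cs _ j

theorem rho_mem_Phi {I : Finset B} [Finite (WP cs I)] {v : B → ℝ} (hv : v ∈ Phi cs I) {x : W}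
    (hx : x ∈ WP cs I) (h : 0 ≤ rho cs x v) : rho cs x v ∈ Phi cs I := by
  obtain ⟨_, w, hw, j, hj, rfl⟩ := mem_Phi.1 hv
  exact mem_Phi.2 ⟨h, x * w, mul_mem hx hw, j, hj, by rw [rho_mul_apply]⟩

theorem simple_perm_Phi {I : Finset B} [Finite (WP cs I)] {j : B} (hj : j ∈ I) {v : B → ℝ}
    (hv : v ∈ Phi cs I) (hne : v ≠ al j) : rho cs (cs.simple j) v ∈ Phi cs I ∧
      rho cs (cs.simple j) v ≠ al j := by
  have h0 := (mem_Phi.1 hv).1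
  obtain ⟨i, hij, hi⟩ : ∃ i, i ≠ j ∧ v i ≠ 0 := by
    by_contra hc
    push Not at hc
    apply hne
    apply root_smul (M := M) (Phi_bf hv) (Phi_bf (al_mem_Phi (cs := cs) hj)) (h0 j)
    ext k
    by_cases hk : k = j
    · subst hk; simp [al]
    · simp [al, hc k hk, hk]
  have hpos : 0 < v i := lt_of_le_of_ne (h0 i) (Ne.symm hi)
  have hval : rho cs (cs.simple j) v i = v i := by
    rw [rho_simple_apply]; simp [al, hij]
  have hne' : rho cs (cs.simple j) v ≠ al j := by
    intro h
    rw [h] at hval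
    simp [al, hij] at hval
    exact hi hval.symm
  refine ⟨?_, hne'⟩
  rcases Phi_sign hv (cs.simple j) with h | h
  · exact rho_mem_Phi hv (simple_mem_WP hj) h
  · have := h i
    rw [hval] at this
    exact absurd this (not_le.2 hpos)

theorem rho_simple_simple (j : B) (v : B → ℝ) :
    rho cs (cs.simple j) (rho cs (cs.simple j) v) = v := by
  rw [← rho_mul_apply, cs.simple_mul_simple_self, map_one]; rfl

theorem card_neg {I : Finset B} [Finite (WP cs I)] {z : W} (hz : z ∈ WP cs I) :
    ((Phi cs I).filter fun v => rho cs z v ≤ 0).card = cs.length z := by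
  refine WP_induction
    (p := fun z => ((Phi cs I).filter fun v => rho cs z v ≤ 0).card = cs.length z) ?_ ?_ hz
  · rw [cs.length_one, Finset.card_eq_zero, Finset.filter_eq_empty_iff]
    intro v hv h
    rw [map_one] at h
    exact Phi_ne_zero hv (le_antisymm h (mem_Phi.1 hv).1)
  · intro z hz j hj hd ih
    have hl := (cs.not_isRightDescent_iff).1 hd
    have h0 := (not_desc_iff cs).1 hd
    rw [hl, ← ih]
    have hinj : Function.Injective (rho cs (cs.simple j)) := (rho cs (cs.simple j)).injective
    have hnot : al j ∉ ((Phi cs I).filter fun v => rho cs z v ≤ 0).image (rho cs (cs.simple j)) := by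
      intro h
      obtain ⟨v, hv, he⟩ := Finset.mem_image.1 h
      rw [Finset.mem_filter] at hv
      by_cases hvj : v = al j
      · subst hvj
        exact rho_ne_zero cs z (al_ne_zero j) (le_antisymm hv.2 h0)
      · exact (simple_perm_Phi hj hv.1 hvj).2 he
    rw [← Finset.card_image_of_injective ((Phi cs I).filter fun v => rho cs z v ≤ 0) hinj, ← Finset.card_insert_of_notMem hnot]
    congr 1
    ext v
    simp only [Finset.mem_insert, Finset.mem_image, Finset.mem_filter]
    constructor
    · rintro ⟨hv, h⟩
      by_cases hvj : v = al j
      · exact Or.inl hvj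
      · right
        refine ⟨rho cs (cs.simple j) v, ⟨(simple_perm_Phi hj hv hvj).1, ?_⟩, rho_simple_simple j v⟩
        rwa [rho_mul_apply] at h
    · rintro (rfl | ⟨u, ⟨hu, h⟩, rfl⟩)
      · refine ⟨al_mem_Phi hj, ?_⟩
        rw [rho_mul_apply, rho_simple_self, map_neg]
        exact neg_nonpos.2 h0
      · have hne : u ≠ al j := by
          rintro rfl
          exact rho_ne_zero cs z (al_ne_zero j) (le_antisymm h h0)
        refine ⟨(simple_perm_Phi hj hu hne).1, ?_⟩
        rw [rho_mul_apply, rho_simple_simple]; exact h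

theorem card_Phi {I : Finset B} [Finite (WP cs I)] {x : W} (hx : x ∈ WP cs I)
    (dx : ∀ j ∈ I, cs.IsRightDescent x j) : (Phi cs I).card = cs.length x := by
  rw [← card_neg hx]
  congr 1
  rw [Finset.filter_true_of_mem]
  intro v hv
  exact rho_nonpos_comb x I v (mem_Phi.1 hv).1 (Phi_off hv) fun j hj => (desc_iff cs).1 (dx j hj)

theorem wL_inv {I : Finset B} {x : W} (hx : x ∈ WP cs I)
    (hm : ∀ u ∈ WP cs I, cs.length u ≤ cs.length x) : x * x = 1 := by
  have h1 := desc_of_max hx hm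
  have h2 := desc_of_max (inv_mem hx) (fun u hu => by rw [cs.length_inv]; exact hm u hu)
  have := max_unique hx (inv_mem hx) h1 h2
  nth_rw 2 [this]
  exact mul_inv_cancel x

theorem wL_perm {I : Finset B} {x : W} (hx : x ∈ WP cs I)
    (hm : ∀ u ∈ WP cs I, cs.length u ≤ cs.length x) {j : B} (hj : j ∈ I) :
    ∃ i ∈ I, - rho cs x (al j) = al i := by
  have hd := desc_of_max hx hm
  have hxx := wL_inv hx hm
  have hinv : ∀ v, rho cs x (rho cs x v) = v := by
    intro v; rw [← rho_mul_apply, hxx, map_one]; rfl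
  set v := - rho cs x (al j) with hv
  have hv0 : 0 ≤ v := neg_nonneg.2 ((desc_iff cs).1 (hd j hj))
  have hvs : ∀ i, i ∉ I → v i = 0 := fun i hi => by
    rw [hv, Pi.neg_apply, rho_al_off hx hj i hi, neg_zero]
  have hvne : v ≠ 0 := neg_ne_zero.2 (rho_ne_zero cs x (al_ne_zero j))
  obtain ⟨i, hi⟩ : ∃ i, v i ≠ 0 := by
    by_contra hc; push Not at hc; exact hvne (funext hc)
  have hiI : i ∈ I := by by_contra hc; exact hi (hvs i hc)
  refine ⟨i, hiI, ?_⟩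
  have hvsum : v = ∑ k, v k • al k := by
    ext k; simp [al, Pi.single_apply]
  have hal : al j = ∑ k, v k • (- rho cs x (al k)) := by
    have h1 : - rho cs x v = al j := by rw [hv, map_neg, hinv, neg_neg]
    rw [← h1]
    nth_rw 1 [hvsum]
    rw [map_sum, ← Finset.sum_neg_distrib]
    simp
  have hnn : ∀ k l, 0 ≤ v k * (- rho cs x (al k)) l := by
    intro k l
    by_cases hk : k ∈ I
    · exact mul_nonneg (hv0 k) (neg_nonneg.2 ((desc_iff cs).1 (hd k hk)) l)
    · rw [hvs k hk, zero_mul]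
  set u := - rho cs x (al i) with hu
  have hu0 : ∀ l, l ≠ j → u l = 0 := by
    intro l hl
    have h1 := congrFun hal l
    rw [Finset.sum_apply] at h1
    have h2 : al j l = 0 := by simp [al, hl]
    rw [h2] at h1
    have h3 := (Finset.sum_eq_zero_iff_of_nonneg (fun k _ => hnn k l)).1 h1.symm i
      (Finset.mem_univ i)
    exact (mul_eq_zero.1 h3).resolve_left hi
  have hbu : bf M u u = 2 := by
    have := bf_root (cs := cs) x i
    rw [hu, ← neg_one_smul ℝ, bf_smul_left, bf_smul_right, this]; ring
  have hbj : bf M (al j) (al j) = 2 := by rw [bf_al_left, fd_al_self]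
  have huj : u = al j := by
    apply root_smul hbu hbj (neg_nonneg.2 ((desc_iff cs).1 (hd i hiI)) j)
    ext k
    by_cases hk : k = j
    · subst hk; simp [al, hu]
    · rw [hu0 k hk]; simp [al, hk]
  rw [hv, ← huj, hu, map_neg, hinv, neg_neg]

end Par


section Sym

variable [Fintype B]

/-- The linear form attached to a vector. -/
def lin : (B → ℝ) →ₗ[ℝ] MvPolynomial B ℝ where
  toFun v := ∑ k, v k • MvPolynomial.X k
  map_add' u v := by simp [add_smul, Finset.sum_add_distrib]
  map_smul' c v := by simp [mul_smul, Finset.smul_sum]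

theorem lin_apply (v : B → ℝ) : lin v = ∑ k, v k • (MvPolynomial.X k : MvPolynomial B ℝ) := rfl

theorem lin_al (i : B) : lin (al i) = MvPolynomial.X i := by
  rw [lin_apply, Finset.sum_eq_single i]
  · simp [al]
  · intro b _ hb; simp [al, hb]
  · simp

theorem lin_homog (v : B → ℝ) : (lin v).IsHomogeneous 1 := by
  rw [lin_apply]
  apply MvPolynomial.IsHomogeneous.sum
  intro i _
  rw [MvPolynomial.smul_eq_C_mul]
  simpa using (MvPolynomial.isHomogeneous_C B (v i)).mul (MvPolynomial.isHomogeneous_X ℝ i)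

theorem vec_sum (v : B → ℝ) : v = ∑ i, v i • al i := by
  ext k; simp [al, Pi.single_apply]

/-- The substitution attached to an endomorphism. -/
def sy (A : (B → ℝ) →ₗ[ℝ] (B → ℝ)) : MvPolynomial B ℝ →ₐ[ℝ] MvPolynomial B ℝ :=
  MvPolynomial.aeval fun i => lin (A (al i))

theorem sy_lin (A : (B → ℝ) →ₗ[ℝ] (B → ℝ)) (v : B → ℝ) : sy A (lin v) = lin (A v) := by
  conv_rhs => rw [vec_sum v, map_sum, map_sum]
  rw [lin_apply, map_sum]
  refine Finset.sum_congr rfl fun i _ => ?_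
  rw [map_smul, map_smul, map_smul]
  simp [sy]

theorem sy_comp (A A' : (B → ℝ) →ₗ[ℝ] (B → ℝ)) : sy (A ∘ₗ A') = (sy A).comp (sy A') := by
  apply MvPolynomial.algHom_ext
  intro i
  rw [← lin_al, sy_lin, AlgHom.comp_apply, sy_lin, sy_lin]; rfl

theorem sy_comp_apply (A A' : (B → ℝ) →ₗ[ℝ] (B → ℝ)) (f) : sy (A ∘ₗ A') f = sy A (sy A' f) := by
  rw [sy_comp]; rfl

theorem sy_id : sy (LinearMap.id : (B → ℝ) →ₗ[ℝ] (B → ℝ)) = AlgHom.id ℝ _ := by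
  apply MvPolynomial.algHom_ext
  intro i
  rw [← lin_al, sy_lin]; rfl

theorem sy_homog (A : (B → ℝ) →ₗ[ℝ] (B → ℝ)) {f : MvPolynomial B ℝ} {d : ℕ}
    (hf : f.IsHomogeneous d) : (sy A f).IsHomogeneous d := by
  have := hf.aeval (fun i => lin (A (al i))) (fun i => lin_homog (A (al i)))
  simpa [sy] using this

/-- Monomials of degree `d`. -/
def mons (B : Type) [Fintype B] (d : ℕ) : Finset (B →₀ ℕ) := Finset.finsuppAntidiag Finset.univ d

theorem mem_mons {d : ℕ} {m : B →₀ ℕ} : m ∈ mons B d ↔ m.degree = d := by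
  simp [mons, Finset.mem_finsuppAntidiag, Finsupp.degree_eq_sum]

theorem mon_homog {d : ℕ} {m : B →₀ ℕ} (hm : m ∈ mons B d) :
    (MvPolynomial.monomial m (1 : ℝ)).IsHomogeneous d :=
  MvPolynomial.isHomogeneous_monomial _ (mem_mons.1 hm)

theorem homog_expand {d : ℕ} {f : MvPolynomial B ℝ} (hf : f.IsHomogeneous d) :
    f = ∑ m ∈ mons B d, MvPolynomial.coeff m f • MvPolynomial.monomial m (1 : ℝ) := by
  ext n
  rw [MvPolynomial.coeff_sum]
  simp only [MvPolynomial.coeff_smul, MvPolynomial.coeff_monomial, smul_eq_mul, mul_ite, mul_one,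
    mul_zero, Finset.sum_ite_eq']
  split_ifs with h
  · rfl
  · exact hf.coeff_eq_zero (fun hh => h (mem_mons.2 hh))

/-- Graded trace. -/
def tr (d : ℕ) : (MvPolynomial B ℝ →ₗ[ℝ] MvPolynomial B ℝ) →ₗ[ℝ] ℝ where
  toFun φ := ∑ m ∈ mons B d, MvPolynomial.coeff m (φ (MvPolynomial.monomial m 1))
  map_add' u v := by simp [Finset.sum_add_distrib]
  map_smul' c v := by simp [Finset.mul_sum]

theorem tr_apply (d : ℕ) (φ : MvPolynomial B ℝ →ₗ[ℝ] MvPolynomial B ℝ) :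
    tr d φ = ∑ m ∈ mons B d, MvPolynomial.coeff m (φ (MvPolynomial.monomial m 1)) := rfl

theorem tr_comm {i j : ℕ} {φ ψ : MvPolynomial B ℝ →ₗ[ℝ] MvPolynomial B ℝ}
    (hφ : ∀ f, f.IsHomogeneous i → (φ f).IsHomogeneous j)
    (hψ : ∀ f, f.IsHomogeneous j → (ψ f).IsHomogeneous i) :
    tr i (ψ ∘ₗ φ) = tr j (φ ∘ₗ ψ) := by
  have key : ∀ (i j : ℕ) (φ ψ : MvPolynomial B ℝ →ₗ[ℝ] MvPolynomial B ℝ),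
      (∀ f, f.IsHomogeneous i → (φ f).IsHomogeneous j) →
      tr i (ψ ∘ₗ φ) = ∑ m ∈ mons B i, ∑ n ∈ mons B j,
        MvPolynomial.coeff n (φ (MvPolynomial.monomial m 1)) *
          MvPolynomial.coeff m (ψ (MvPolynomial.monomial n 1)) := by
    intro i j φ ψ hφ
    rw [tr_apply]
    refine Finset.sum_congr rfl fun m hm => ?_
    rw [LinearMap.comp_apply]
    conv_lhs => rw [homog_expand (hφ _ (mon_homog hm)), map_sum, MvPolynomial.coeff_sum]
    simp
  rw [key i j φ ψ hφ, key j i ψ φ hψ, Finset.sum_comm]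
  refine Finset.sum_congr rfl fun m _ => Finset.sum_congr rfl fun n _ => mul_comm _ _

theorem tr_congr {d : ℕ} {φ ψ : MvPolynomial B ℝ →ₗ[ℝ] MvPolynomial B ℝ}
    (h : ∀ f, f.IsHomogeneous d → φ f = ψ f) : tr d φ = tr d ψ := by
  rw [tr_apply, tr_apply]
  refine Finset.sum_congr rfl fun m hm => ?_
  rw [h _ (mon_homog hm)]

/-- The Molien series of an endomorphism. -/
def hs (A : (B → ℝ) →ₗ[ℝ] (B → ℝ)) : PowerSeries ℝ :=
  PowerSeries.mk fun d => tr d (sy A).toLinearMap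

theorem hs_comm (A A' : (B → ℝ) →ₗ[ℝ] (B → ℝ)) : hs (A ∘ₗ A') = hs (A' ∘ₗ A) := by
  ext d
  simp only [hs, PowerSeries.coeff_mk]
  have h := tr_comm (i := d) (j := d) (φ := (sy A').toLinearMap) (ψ := (sy A).toLinearMap)
    (fun f hf => sy_homog _ hf) (fun f hf => sy_homog _ hf)
  rw [sy_comp, sy_comp]
  exact h

theorem sy_neg (A : (B → ℝ) →ₗ[ℝ] (B → ℝ)) {f : MvPolynomial B ℝ} {d : ℕ}
    (hf : f.IsHomogeneous d) : sy (-A) f = (-1 : ℝ) ^ d • sy A f := by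
  have hm : ∀ m ∈ mons B d, sy (-A) (MvPolynomial.monomial m 1)
      = (-1 : ℝ) ^ d • sy A (MvPolynomial.monomial m 1) := by
    intro m hm
    have hd := mem_mons.1 hm
    rw [sy, sy, MvPolynomial.aeval_monomial, MvPolynomial.aeval_monomial]
    simp only [LinearMap.neg_apply, map_neg, map_one, one_mul]
    rw [Finsupp.prod_fintype _ _ (by simp), Finsupp.prod_fintype _ _ (by simp)]
    rw [← hd, Finsupp.degree_eq_sum, ← Finset.prod_pow_eq_pow_sum, MvPolynomial.smul_eq_C_mul,
      map_prod, ← Finset.prod_mul_distrib]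
    refine Finset.prod_congr rfl fun i _ => ?_
    rw [neg_pow]; simp
  rw [homog_expand hf, map_sum, map_sum, Finset.smul_sum]
  refine Finset.sum_congr rfl fun m h => ?_
  rw [map_smul, map_smul, hm m h, smul_comm]

theorem hs_neg (A : (B → ℝ) →ₗ[ℝ] (B → ℝ)) : hs (-A) = PowerSeries.rescale (-1) (hs A) := by
  ext d
  simp only [hs, PowerSeries.coeff_mk, PowerSeries.coeff_rescale]
  rw [← smul_eq_mul, ← map_smul]
  apply tr_congr
  intro f hf
  simpa using sy_neg A hf

theorem hs_diag (A : (B → ℝ) →ₗ[ℝ] (B → ℝ)) (e : B → ℝ) (h : ∀ i, A (al i) = e i • al i) :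
    hs A * ∏ i, (1 - PowerSeries.C (e i) * PowerSeries.X) = 1 := by
  have h1 : hs A = ∏ i, PowerSeries.mk (fun n => e i ^ n) := by
    ext d
    rw [PowerSeries.coeff_prod]
    simp only [hs, PowerSeries.coeff_mk, tr_apply]
    refine Finset.sum_congr rfl fun m _ => ?_
    have : sy A (MvPolynomial.monomial m 1) = (∏ i, e i ^ m i) • MvPolynomial.monomial m 1 := by
      rw [sy, MvPolynomial.aeval_monomial, Finsupp.prod_fintype _ _ (by simp),
        MvPolynomial.monomial_eq, Finsupp.prod_fintype _ _ (by simp), MvPolynomial.smul_eq_C_mul,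
        map_prod]
      simp only [map_one, one_mul]
      rw [← Finset.prod_mul_distrib]
      refine Finset.prod_congr rfl fun i _ => ?_
      rw [h, map_smul, lin_al, MvPolynomial.smul_eq_C_mul, mul_pow, map_pow]
    rw [AlgHom.toLinearMap_apply, this]
    simp
  rw [h1, ← Finset.prod_mul_distrib]
  apply Finset.prod_eq_one
  intro i _
  ext n
  rw [mul_sub, mul_one, map_sub, PowerSeries.coeff_one]
  cases n with
  | zero => simp
  | succ n => 
    rw [mul_left_comm, PowerSeries.coeff_C_mul, PowerSeries.coeff_succ_mul_X]
    simp [pow_succ']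

theorem hs_id : hs (LinearMap.id : (B → ℝ) →ₗ[ℝ] (B → ℝ)) * (1 - PowerSeries.X) ^ Fintype.card B
    = 1 := by
  have := hs_diag (LinearMap.id : (B → ℝ) →ₗ[ℝ] (B → ℝ)) (fun _ => 1) (by simp)
  simpa using this

theorem hs_inv (A : (B → ℝ) →ₗ[ℝ] (B → ℝ)) (hA : A ∘ₗ A = LinearMap.id) :
    ∃ a b : ℕ, a + b = Fintype.card B ∧
      hs A * ((1 - PowerSeries.X) ^ a * (1 + PowerSeries.X) ^ b) = 1 := by
  have hAA : ∀ v, A (A v) = v := fun v => LinearMap.congr_fun hA v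
  let p := LinearMap.ker (A - LinearMap.id)
  let q := LinearMap.ker (A + LinearMap.id)
  have hp : ∀ v, v ∈ p ↔ A v = v := by
    intro v; simp [p, sub_eq_zero]
  have hq : ∀ v, v ∈ q ↔ A v = -v := by
    intro v; simp [q, add_eq_zero_iff_eq_neg]
  have hc : IsCompl p q := by
    refine IsCompl.of_eq ?_ ?_
    · rw [Submodule.eq_bot_iff]
      rintro v ⟨h1, h2⟩
      have h3 := (hp v).1 h1
      rw [(hq v).1 h2] at h3
      exact self_eq_neg.1 h3.symm
    · rw [eq_top_iff]
      intro v _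
      have : v = (1 / 2 : ℝ) • (v + A v) + (1 / 2 : ℝ) • (v - A v) := by
        rw [← smul_add]; simp [← two_smul ℝ v]
      rw [this]
      refine Submodule.add_mem_sup ?_ ?_
      · rw [hp, map_smul, map_add, hAA, add_comm]
      · rw [hq, map_smul, map_sub, hAA, ← smul_neg, neg_sub]
  let bp := Module.finBasis ℝ p
  let bq := Module.finBasis ℝ q
  let bb := (bp.prod bq).map (Submodule.prodEquivOfIsCompl p q hc)
  have hcard : Fintype.card (Fin (Module.finrank ℝ p) ⊕ Fin (Module.finrank ℝ q))
      = Fintype.card B := by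
    rw [← Module.finrank_eq_card_basis bb, Module.finrank_fintype_fun_eq_card]
  let eq := Fintype.equivOfCardEq hcard
  let sg : Fin (Module.finrank ℝ p) ⊕ Fin (Module.finrank ℝ q) → ℝ := 
    Sum.elim (fun _ => 1) (fun _ => -1)
  have hbb : ∀ k, A (bb k) = sg k • bb k := by
    rintro (k | k)
    · simp [bb, sg, (hp _).1 (bp k).2]
    · simp [bb, sg, (hq _).1 (bq k).2]
  let T : (B → ℝ) ≃ₗ[ℝ] (B → ℝ) := (Pi.basisFun ℝ B).equiv bb eq.symm
  have hT : ∀ i, T (al i) = bb (eq.symm i) := by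
    intro i
    have := (Pi.basisFun ℝ B).equiv_apply i bb eq.symm
    rwa [Pi.basisFun_apply] at this
  refine ⟨Module.finrank ℝ p, Module.finrank ℝ q, by simpa using hcard, ?_⟩
  let A' := T.symm.toLinearMap ∘ₗ (A ∘ₗ T.toLinearMap)
  have e1 : hs A = hs A' := by
    rw [hs_comm, LinearMap.comp_assoc]
    simp
  have e2 := hs_diag A' (fun i => sg (eq.symm i)) (by
    intro i
    simp only [A', LinearMap.comp_apply, LinearEquiv.coe_coe]
    rw [hT, hbb, map_smul, ← hT, LinearEquiv.symm_apply_apply])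
  rw [e1]
  refine Eq.trans ?_ e2
  congr 1
  rw [Equiv.prod_comp eq.symm (fun k => (1 - PowerSeries.C (sg k) * PowerSeries.X)), 
    Fintype.prod_sum_type]
  simp [sg]

end Sym

section Molien

variable [Fintype B]

theorem comp_mul {D g : MvPolynomial B ℝ} {N : ℕ} (hD : D.IsHomogeneous N) (j : ℕ) :
    MvPolynomial.homogeneousComponent (N + j) (D * g) = D * MvPolynomial.homogeneousComponent j g := by
  let _ := MvPolynomial.gradedAlgebra (σ := B) (R := ℝ)
  have h := DirectSum.coe_decompose_mul_add_of_left_mem (MvPolynomial.homogeneousSubmodule B ℝ)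
    (j := j) (b := g) (i := N) (a := D) hD
  have h1 := MvPolynomial.decomposition.decompose'_apply (D * g) (N + j)
  have h2 := MvPolynomial.decomposition.decompose'_apply g j
  rw [← h1, ← h2]
  exact h

theorem hom_div {D g : MvPolynomial B ℝ} {N d : ℕ} (hD : D.IsHomogeneous N) (h0 : D ≠ 0)
    (h : (D * g).IsHomogeneous (d + N)) : g.IsHomogeneous d := by
  have h1 : g = MvPolynomial.homogeneousComponent d g := by
    apply mul_left_cancel₀ h0
    rw [← comp_mul hD, add_comm N d, MvPolynomial.homogeneousComponent_eq_self h]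
  rw [h1]
  exact MvPolynomial.homogeneousComponent_isHomogeneous d g

theorem hom_div_lt {D g : MvPolynomial B ℝ} {N d : ℕ} (hD : D.IsHomogeneous N) (h0 : D ≠ 0)
    (hd : d < N) (h : (D * g).IsHomogeneous d) : g = 0 := by
  by_contra hg
  have h1 := h.totalDegree (mul_ne_zero h0 hg)
  rw [MvPolynomial.totalDegree_mul_of_isDomain h0 hg, hD.totalDegree h0] at h1
  omega

variable {cs : CoxeterSystem M W}

variable (cs) in
/-- The sign character. -/
def sgn (w : W) : ℝ := (-1) ^ cs.length w

theorem sgn_mul (x y : W) : sgn cs (x * y) = sgn cs x * sgn cs y := by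
  rw [sgn, sgn, sgn, ← pow_add, neg_one_pow_eq_pow_mod_two, cs.length_mul_mod_two,
    ← neg_one_pow_eq_pow_mod_two]

theorem sgn_simple (i : B) : sgn cs (cs.simple i) = -1 := by
  rw [sgn, cs.length_simple, pow_one]

theorem sgn_one : sgn cs 1 = 1 := by
  rw [sgn, cs.length_one, pow_zero]

theorem sgn_sq (x : W) : sgn cs x * sgn cs x = 1 := by
  rw [sgn, ← pow_add, ← two_mul, pow_mul]; norm_num

theorem sgn_inv (x : W) : sgn cs x⁻¹ = sgn cs x := by
  rw [sgn, cs.length_inv, sgn]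

variable (cs) in
/-- `rho` as a linear map. -/
def rl (w : W) : (B → ℝ) →ₗ[ℝ] (B → ℝ) := (rho cs w).toLinearMap

theorem rl_apply (w : W) (v : B → ℝ) : rl cs w v = rho cs w v := rfl

theorem rl_mul (x y : W) : rl cs (x * y) = rl cs x ∘ₗ rl cs y := by
  apply LinearMap.ext
  intro v
  exact rho_mul_apply cs x y v

theorem rl_one : rl cs 1 = LinearMap.id := by
  ext1; simp [rl]

variable (cs) in
/-- The elements of `W_J` as a finset. -/
def WF (J : Finset B) : Finset W :=
  if h : (WP cs J : Set W).Finite then h.toFinset else ∅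

theorem mem_WF {J : Finset B} [h : Finite (WP cs J)] {w : W} : w ∈ WF cs J ↔ w ∈ WP cs J := by
  have h' : (WP cs J : Set W).Finite := h
  rw [WF, dif_pos h']; simp

variable (cs) in
/-- Product of the positive roots. -/
def Dl (I : Finset B) [Finite (WP cs I)] : MvPolynomial B ℝ := ∏ v ∈ Phi cs I, lin v

theorem lin_inj {u v : B → ℝ} (h : lin u = lin v) : u = v := by
  ext i
  have h1 := congrArg (MvPolynomial.coeff (Finsupp.single i 1)) h
  simpa [lin_apply, MvPolynomial.coeff_sum, MvPolynomial.coeff_X', Finsupp.single_left_inj] using h1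

theorem lin_ne_zero {v : B → ℝ} (h : v ≠ 0) : lin v ≠ 0 := fun h' => h (lin_inj (by rw [h', map_zero]))

variable {I : Finset B} [Finite (WP cs I)]

theorem Dl_homog : (Dl cs I).IsHomogeneous (Phi cs I).card := by
  have := MvPolynomial.IsHomogeneous.prod (Phi cs I) (fun v => lin v) (fun _ => 1)
    (fun v _ => lin_homog v)
  simpa [Dl] using this

theorem Dl_ne_zero : Dl cs I ≠ 0 := by
  rw [Dl, Finset.prod_ne_zero_iff]
  intro v hv
  exact lin_ne_zero (Phi_ne_zero hv)

theorem simple_Dl {j : B} (hj : j ∈ I) : sy (rl cs (cs.simple j)) (Dl cs I) = - Dl cs I := by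
  have hins : Phi cs I = insert (al j) ((Phi cs I).erase (al j)) :=
    (Finset.insert_erase (al_mem_Phi hj)).symm
  rw [Dl, map_prod, hins, Finset.prod_insert (Finset.notMem_erase _ _),
    Finset.prod_insert (Finset.notMem_erase _ _), sy_lin, rl_apply, rho_simple_self, map_neg, neg_mul]
  congr 2
  refine Finset.prod_nbij' (rho cs (cs.simple j)) (rho cs (cs.simple j)) ?_ ?_ ?_ ?_ ?_
  · intro v hv
    rw [Finset.mem_erase] at hv ⊢
    exact (simple_perm_Phi hj hv.2 hv.1).symm
  · intro v hv
    rw [Finset.mem_erase] at hv ⊢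
    exact (simple_perm_Phi hj hv.2 hv.1).symm
  · intro v _; exact rho_simple_simple j v
  · intro v _; exact rho_simple_simple j v
  · intro v _; rw [sy_lin, rl_apply]

theorem WP_Dl {w : W} (hw : w ∈ WP cs I) : sy (rl cs w) (Dl cs I) = sgn cs w • Dl cs I := by
  refine WP_induction (p := fun w => sy (rl cs w) (Dl cs I) = sgn cs w • Dl cs I) ?_ ?_ hw
  · rw [rl_one, sy_id, sgn_one, one_smul]; rfl
  · intro z hz j hj _ ih
    rw [rl_mul, sy_comp_apply, simple_Dl hj, map_neg, ih, sgn_mul, sgn_simple, mul_neg_one, neg_smul]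

theorem X_dvd_sub (j : B) (f : MvPolynomial B ℝ) :
    MvPolynomial.X j ∣ f - sy (rl cs (cs.simple j)) f := by
  induction f using MvPolynomial.induction_on with
  | C a =>
    have : sy (rl cs (cs.simple j)) (MvPolynomial.C a) = MvPolynomial.C a := by simp [sy]
    rw [this, sub_self]; exact dvd_zero _
  | add p q hp hq =>
    rw [map_add, add_sub_add_comm]; exact dvd_add hp hq
  | mul_X p i hp =>
    have h1 : sy (rl cs (cs.simple j)) (MvPolynomial.X i) =
        MvPolynomial.X i - (fd M j (al i)) • MvPolynomial.X j := by
      rw [← lin_al, sy_lin, rl_apply, rho_simple_apply, map_sub, map_smul, lin_al, lin_al]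
    rw [map_mul, h1]
    obtain ⟨r, hr⟩ := hp
    refine ⟨r * MvPolynomial.X i + fd M j (al i) • sy (rl cs (cs.simple j)) p, ?_⟩
    rw [mul_add, ← mul_assoc, ← hr, mul_smul_comm, mul_sub, mul_smul_comm]
    ring_nf

theorem lin_prime {v : B → ℝ} (hv : v ∈ Phi cs I) : Prime (lin v) := by
  obtain ⟨_, w, hw, j, hj, rfl⟩ := mem_Phi.1 hv
  have h1 : sy (rl cs w) ∘ sy (rl cs w⁻¹) = id := by
    funext f
    rw [Function.comp, ← sy_comp_apply, ← rl_mul, mul_inv_cancel, rl_one, sy_id]; rfl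
  have h2 : sy (rl cs w⁻¹) ∘ sy (rl cs w) = id := by
    funext f
    rw [Function.comp, ← sy_comp_apply, ← rl_mul, inv_mul_cancel, rl_one, sy_id]; rfl
  let e : MvPolynomial B ℝ ≃* MvPolynomial B ℝ :=
    { toFun := sy (rl cs w), invFun := sy (rl cs w⁻¹), left_inv := congrFun h2,
      right_inv := congrFun h1, map_mul' := map_mul _ }
  have h3 : lin (rho cs w (al j)) = e (MvPolynomial.X j) := by
    show _ = sy (rl cs w) (MvPolynomial.X j)
    rw [← lin_al, sy_lin, rl_apply]
  rw [h3, MulEquiv.prime_iff]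
  exact MvPolynomial.X_prime

theorem lin_relprime {u v : B → ℝ} (hu : u ∈ Phi cs I) (hv : v ∈ Phi cs I) (h : u ≠ v) :
    IsRelPrime (lin u) (lin v) := by
  rw [(lin_prime hu).irreducible.isRelPrime_iff_not_dvd]
  intro hd
  rw [(lin_prime hu).irreducible.dvd_irreducible_iff_associated (lin_prime hv).irreducible] at hd
  obtain ⟨c, hc⟩ := hd
  obtain ⟨r, _, hr⟩ := MvPolynomial.isUnit_iff_eq_C_of_isReduced.1 c.isUnit
  rw [hr, mul_comm, ← MvPolynomial.smul_eq_C_mul, ← map_smul] at hc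
  have huv := lin_inj hc
  have hu0 := (mem_Phi.1 hu).1
  have hv0 := (mem_Phi.1 hv).1
  have hrpos : 0 ≤ r := by
    by_contra hr'
    push Not at hr'
    apply Phi_ne_zero hv
    refine le_antisymm ?_ hv0
    rw [← huv]
    intro i
    exact mul_nonpos_of_nonpos_of_nonneg hr'.le (hu0 i)
  exact h (root_smul (Phi_bf hv) (Phi_bf hu) hrpos huv.symm).symm

theorem Dl_dvd {f : MvPolynomial B ℝ} (hf : ∀ w ∈ WP cs I, sy (rl cs w) f = sgn cs w • f) :
    Dl cs I ∣ f := by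
  apply Finset.prod_dvd_of_isRelPrime
  · intro u hu v hv h
    exact lin_relprime hu hv h
  · intro v hv
    obtain ⟨_, w, hw, j, hj, rfl⟩ := mem_Phi.1 hv
    have h1 : MvPolynomial.X j ∣ f := by
      have := X_dvd_sub (cs := cs) j f
      rw [hf _ (simple_mem_WP hj), sgn_simple, neg_one_smul, sub_neg_eq_add] at this
      obtain ⟨r, hr⟩ := this
      refine ⟨(1 / 2 : ℝ) • r, ?_⟩
      rw [mul_smul_comm, ← hr, ← two_smul ℝ f, smul_smul]; norm_num
    have h2 := map_dvd (sy (rl cs w)) h1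
    rw [← lin_al, sy_lin, rl_apply, hf w hw] at h2
    have h3 := h2.mul_left (MvPolynomial.C (sgn cs w))
    rwa [← MvPolynomial.smul_eq_C_mul, smul_smul, sgn_sq, one_smul] at h3

/-- Molien functional equation. -/
theorem molien (G : (B → ℝ) →ₗ[ℝ] (B → ℝ)) (hG : sy G (Dl cs I) = Dl cs I) :
    ∑ w ∈ WF cs I, sgn cs w • hs (rl cs w ∘ₗ G) =
      PowerSeries.X ^ (Phi cs I).card * ∑ w ∈ WF cs I, hs (rl cs w ∘ₗ G) := by
  set N := (Phi cs I).card with hN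
  set D := Dl cs I with hD
  have hDh : D.IsHomogeneous N := Dl_homog
  have hD0 : D ≠ 0 := Dl_ne_zero
  let Es : MvPolynomial B ℝ →ₗ[ℝ] MvPolynomial B ℝ :=
    ∑ w ∈ WF cs I, sgn cs w • (sy (rl cs w)).toLinearMap
  let Et : MvPolynomial B ℝ →ₗ[ℝ] MvPolynomial B ℝ :=
    ∑ w ∈ WF cs I, (sy (rl cs w)).toLinearMap
  have Es_apply : ∀ f, Es f = ∑ w ∈ WF cs I, sgn cs w • sy (rl cs w) f := by
    intro f; simp [Es]
  have Et_apply : ∀ f, Et f = ∑ w ∈ WF cs I, sy (rl cs w) f := by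
    intro f; simp [Et]
  have Es_anti : ∀ f, ∀ u ∈ WP cs I, sy (rl cs u) (Es f) = sgn cs u • Es f := by
    intro f u hu
    rw [Es_apply, map_sum, Finset.smul_sum]
    refine Finset.sum_nbij' (fun w => u * w) (fun w => u⁻¹ * w) ?_ ?_ ?_ ?_ ?_
    · intro w hw; rw [mem_WF] at hw ⊢; exact mul_mem hu hw
    · intro w hw; rw [mem_WF] at hw ⊢; exact mul_mem (inv_mem hu) hw
    · intro w _; simp
    · intro w _; simp
    · intro w _
      rw [map_smul, smul_smul, sgn_mul, ← mul_assoc, sgn_sq, one_mul, rl_mul, sy_comp_apply]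
  have Es_D : ∀ f, Es (D * f) = D * Et f := by
    intro f
    rw [Es_apply, Et_apply, Finset.mul_sum]
    refine Finset.sum_congr rfl fun w hw => ?_
    rw [map_mul, hD, WP_Dl (mem_WF.1 hw), smul_mul_assoc, smul_smul, sgn_sq, one_smul]
  have Es_hom : ∀ d f, f.IsHomogeneous d → (Es f).IsHomogeneous d := by
    intro d f hf
    rw [Es_apply]
    apply MvPolynomial.IsHomogeneous.sum
    intro w _
    rw [MvPolynomial.smul_eq_C_mul]
    simpa using (MvPolynomial.isHomogeneous_C B (sgn cs w)).mul (sy_homog (rl cs w) hf)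
  let m : MvPolynomial B ℝ →ₗ[ℝ] MvPolynomial B ℝ := LinearMap.mulLeft ℝ D
  obtain ⟨l, hl⟩ := LinearMap.exists_leftInverse_of_injective m (by
    rw [LinearMap.ker_eq_bot]
    intro f g h
    exact mul_left_cancel₀ hD0 h)
  have hl' : ∀ f, l (D * f) = f := fun f => LinearMap.congr_fun hl f
  have hEs : ∀ f, D * l (Es f) = Es f := by
    intro f
    obtain ⟨r, hr⟩ := Dl_dvd (Es_anti f)
    rw [hr, ← hD, hl']
  -- traces
  have t1 : ∀ d, tr (d + N) ((sy G).toLinearMap ∘ₗ Es) = tr d ((sy G).toLinearMap ∘ₗ Et) := by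
    intro d
    have a1 : tr (d + N) (((sy G).toLinearMap ∘ₗ m) ∘ₗ (l ∘ₗ Es))
        = tr d ((l ∘ₗ Es) ∘ₗ ((sy G).toLinearMap ∘ₗ m)) := by
      apply tr_comm
      · intro f hf
        exact hom_div hDh hD0 (by
          rw [LinearMap.comp_apply, hEs]; exact Es_hom _ _ hf)
      · intro f hf
        apply sy_homog
        rw [add_comm]
        exact hDh.mul hf
    have a2 : ((sy G).toLinearMap ∘ₗ m) ∘ₗ (l ∘ₗ Es) = (sy G).toLinearMap ∘ₗ Es := by
      apply LinearMap.ext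
      intro f
      show sy G (D * l (Es f)) = sy G (Es f)
      rw [hEs]
    have a3 : (l ∘ₗ Es) ∘ₗ ((sy G).toLinearMap ∘ₗ m) = Et ∘ₗ (sy G).toLinearMap := by
      apply LinearMap.ext
      intro f
      show l (Es (sy G (D * f))) = Et (sy G f)
      rw [map_mul, hG, Es_D, hl']
    rw [← a2, a1, a3]
    apply tr_comm
    · intro f hf; exact sy_homog _ hf
    · intro f hf
      rw [Et_apply]
      apply MvPolynomial.IsHomogeneous.sum
      intro w _
      exact sy_homog _ hf
  have t2 : ∀ d, d < N → tr d ((sy G).toLinearMap ∘ₗ Es) = 0 := by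
    intro d hd
    have : tr d ((sy G).toLinearMap ∘ₗ Es) = tr d (0 : MvPolynomial B ℝ →ₗ[ℝ] MvPolynomial B ℝ) := by
      apply tr_congr
      intro f hf
      have h1 : (D * l (Es f)).IsHomogeneous d := by rw [hEs]; exact Es_hom _ _ hf
      have h2 := hom_div_lt hDh hD0 hd h1
      rw [LinearMap.comp_apply, ← hEs, h2, mul_zero, map_zero]; rfl
    rw [this, map_zero]
  have c1 : ∀ d, PowerSeries.coeff d (∑ w ∈ WF cs I, sgn cs w • hs (rl cs w ∘ₗ G))
      = tr d ((sy G).toLinearMap ∘ₗ Es) := by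
    intro d
    have : (sy G).toLinearMap ∘ₗ Es
        = ∑ w ∈ WF cs I, sgn cs w • (sy (G ∘ₗ rl cs w)).toLinearMap := by
      apply LinearMap.ext
      intro f
      show sy G (Es f) = _
      rw [Es_apply, map_sum, LinearMap.sum_apply]
      refine Finset.sum_congr rfl fun w _ => ?_
      rw [map_smul, ← sy_comp_apply]; rfl
    rw [this, map_sum, map_sum]
    refine Finset.sum_congr rfl fun w _ => ?_
    rw [hs_comm, map_smul, map_smul, hs, PowerSeries.coeff_mk]
  have c2 : ∀ d, PowerSeries.coeff d (∑ w ∈ WF cs I, hs (rl cs w ∘ₗ G))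
      = tr d ((sy G).toLinearMap ∘ₗ Et) := by
    intro d
    have : (sy G).toLinearMap ∘ₗ Et
        = ∑ w ∈ WF cs I, (sy (G ∘ₗ rl cs w)).toLinearMap := by
      apply LinearMap.ext
      intro f
      show sy G (Et f) = _
      rw [Et_apply, map_sum, LinearMap.sum_apply]
      refine Finset.sum_congr rfl fun w _ => ?_
      rw [← sy_comp_apply]; rfl
    rw [this, map_sum, map_sum]
    refine Finset.sum_congr rfl fun w _ => ?_
    rw [hs_comm, hs, PowerSeries.coeff_mk]
  ext d
  rw [c1, PowerSeries.coeff_X_pow_mul']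
  split_ifs with h
  · rw [c2, ← t1, Nat.sub_add_cancel h]
  · exact t2 d (not_le.1 h)

end Molien

section Lefschetz

variable {X : Type} [Group X] [Fintype X] (s : B → X) (D : X → Finset B) (len : X → ℕ)

/-- Abstract parabolic subgroup. -/
def Pa (J : Finset B) : Subgroup X := Subgroup.closure (s '' (J : Set B))

theorem s_mem_Pa {J : Finset B} {j : B} (hj : j ∈ J) : s j ∈ Pa s J :=
  Subgroup.subset_closure ⟨j, hj, rfl⟩

/-- Indicator function of a descent coset. -/
def ef (x y : X) : ℝ := if x⁻¹ * y ∈ Pa s (D x) then 1 else 0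

/-- The operator with columns `ef`. -/
def EE : (X → ℝ) →ₗ[ℝ] (X → ℝ) where
  toFun c y := ∑ x, c x * ef s D x y
  map_add' u v := by funext y; simp [add_mul, Finset.sum_add_distrib]
  map_smul' u v := by funext y; simp [mul_assoc, Finset.mul_sum]

theorem EE_apply (c : X → ℝ) (y : X) : EE s D c y = ∑ x, c x * ef s D x y := rfl

theorem EE_single (x : X) : EE s D (Pi.single x 1) = ef s D x := by
  funext y
  rw [EE_apply, Finset.sum_eq_single x]
  · simp
  · intro b _ hb; simp [hb]
  · simp

theorem ef_self (x : X) : ef s D x x = 1 := by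
  simp [ef, one_mem]

variable {s D len}

theorem ef_tri (h2 : ∀ x, ∀ z ∈ Pa s (D x), z ≠ 1 → len (x * z) < len x)
    {x y : X} (h : ef s D x y ≠ 0) : y = x ∨ len y < len x := by
  by_cases hm : x⁻¹ * y ∈ Pa s (D x)
  · by_cases h1 : x⁻¹ * y = 1
    · left; exact (inv_mul_eq_one.1 h1).symm
    · right
      have := h2 x _ hm h1
      rwa [mul_inv_cancel_left] at this
  · exact absurd (by simp [ef, hm]) h

theorem EE_top (h2 : ∀ x, ∀ z ∈ Pa s (D x), z ≠ 1 → len (x * z) < len x)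
    (c : X → ℝ) (hc : ∃ x, c x ≠ 0) : ∃ x, c x ≠ 0 ∧ EE s D c x = c x ∧
      ∀ y, len x < len y → EE s D c y = 0 := by
  obtain ⟨x1, hx1⟩ := hc
  obtain ⟨x, hx, hmax⟩ := Finset.exists_max_image (Finset.univ.filter fun x => c x ≠ 0) len
    ⟨x1, by simpa using hx1⟩
  have hx' : c x ≠ 0 := by simpa using hx
  refine ⟨x, hx', ?_, ?_⟩
  · rw [EE_apply, Finset.sum_eq_single x]
    · rw [ef_self, mul_one]
    · intro z _ hz
      by_contra hne
      have hcz := left_ne_zero_of_mul hne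
      rcases ef_tri h2 (right_ne_zero_of_mul hne) with h | h
      · exact hz h.symm
      · exact absurd (hmax z (by simpa using hcz)) (not_le.2 h)
    · simp
  · intro y hy
    rw [EE_apply]
    apply Finset.sum_eq_zero
    intro z _
    by_contra hne
    have hcz := left_ne_zero_of_mul hne
    have h3 := hmax z (by simpa using hcz)
    rcases ef_tri h2 (right_ne_zero_of_mul hne) with h | h
    · subst h; omega
    · omega

theorem EE_inj (h2 : ∀ x, ∀ z ∈ Pa s (D x), z ≠ 1 → len (x * z) < len x) :
    Function.Injective (EE s D) := by
  rw [← LinearMap.ker_eq_bot, LinearMap.ker_eq_bot']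
  intro c hc
  by_contra h
  obtain ⟨x, h3, h4, _⟩ := EE_top h2 c (by
    by_contra hn; push Not at hn; exact h (funext hn))
  rw [hc] at h4
  exact h3 h4.symm

theorem ef_right {x : X} {J : Finset B} (hJ : J ⊆ D x) {j : B} (hj : j ∈ J) (y : X) :
    ef s D x (y * s j) = ef s D x y := by
  unfold ef
  rw [← mul_assoc, Subgroup.mul_mem_cancel_right _ (s_mem_Pa s (hJ hj))]

theorem EE_inv (h2 : ∀ x, ∀ z ∈ Pa s (D x), z ≠ 1 → len (x * z) < len x)
    {I : Finset B} (h1 : ∀ x, ∀ j ∈ I, j ∉ D x → len x < len (x * s j))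
    {J : Finset B} (hJI : J ⊆ I) (c : X → ℝ)
    (hf : ∀ j ∈ J, ∀ y, EE s D c (y * s j) = EE s D c y) (x : X) (hx : ¬ J ⊆ D x) : c x = 0 := by
  by_contra hcx
  let c' : X → ℝ := fun x => if J ⊆ D x then 0 else c x
  let c'' : X → ℝ := fun x => if J ⊆ D x then c x else 0
  have hcc : c' = c - c'' := by
    funext z; by_cases h : J ⊆ D z <;> simp [c', c'', h]
  have hinv : ∀ j ∈ J, ∀ y, EE s D c' (y * s j) = EE s D c' y := by
    intro j hj y
    rw [hcc, map_sub, Pi.sub_apply, Pi.sub_apply, hf j hj]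
    congr 1
    rw [EE_apply, EE_apply]
    refine Finset.sum_congr rfl fun z _ => ?_
    by_cases h : J ⊆ D z
    · rw [ef_right h hj]
    · simp [c'', h]
  obtain ⟨x0, h3, h4, h5⟩ := EE_top h2 c' ⟨x, by simpa [c', hx] using hcx⟩
  have hx0 : ¬ J ⊆ D x0 := by
    intro h; apply h3; simp [c', h]
  rw [Finset.not_subset] at hx0
  obtain ⟨j, hj, hjD⟩ := hx0
  have h6 := h5 _ (h1 x0 j (hJI hj) hjD)
  rw [hinv j hj, h4] at h6
  exact h3 h6

theorem trace_sum (φ : (X → ℝ) →ₗ[ℝ] (X → ℝ)) :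
    LinearMap.trace ℝ (X → ℝ) φ = ∑ x, φ (Pi.single x 1) x := by
  rw [LinearMap.trace_eq_matrix_trace ℝ (Pi.basisFun ℝ X)]
  simp [Matrix.trace, LinearMap.toMatrix_apply]

/-- The Lefschetz type identity. -/
theorem lefschetz (h2 : ∀ x, ∀ z ∈ Pa s (D x), z ≠ 1 → len (x * z) < len x)
    {I : Finset B} (h1 : ∀ x, ∀ j ∈ I, j ∉ D x → len x < len (x * s j))
    (hDI : ∀ x, D x ⊆ I) (hD : ∀ x, D x = ∅ → x = 1) (hD1 : D 1 = ∅)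
    (σ : X →* X) (hσ : ∀ x, σ (σ x) = x) (π : B → B) (hπ : ∀ j ∈ I, π j ∈ I)
    (hππ : ∀ j ∈ I, π (π j) = j)
    (hσs : ∀ j ∈ I, σ (s j) = s (π j))
    (sg : X → ℝ) (sg1 : sg 1 = 1) (sgs : ∀ x, ∀ j ∈ I, sg (x * s j) = - sg x)
    (hgen : Pa s I = ⊤) (hinv : ∀ j ∈ I, s j * s j = 1)
    (ε : Finset B → ℝ) (St : Finset B → Prop) (hSt : ∀ J ⊆ I, (St J ↔ ∀ j ∈ J, π j ∈ J))
    (hε : ∀ K ⊆ I, St K → ∑ J ∈ K.powerset.filter St, ε J = if K = ∅ then 1 else 0) (w : X) :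
    ∑ J ∈ I.powerset.filter St, ε J * ((1 / (Nat.card (Pa s J) : ℝ)) *
      ((Finset.univ.filter fun x => x⁻¹ * w * σ x ∈ Pa s J).card : ℝ)) = sg w := by
  let C : (X → ℝ) ≃ₗ[ℝ] (X → ℝ) := LinearEquiv.ofInjectiveEndo (EE s D) (EE_inj h2)
  have hCE : ∀ c, C.symm (EE s D c) = c := fun c => C.symm_apply_apply c
  have hEC : ∀ f, EE s D (C.symm f) = f := fun f => C.apply_symm_apply f
  have hK : ∀ J ⊆ I, ∀ f : X → ℝ, (∀ j ∈ J, ∀ y, f (y * s j) = f y) → ∀ x, ¬ J ⊆ D x →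
      C.symm f x = 0 := by
    intro J hJ f hf x hx
    refine EE_inv h2 h1 hJ _ ?_ x hx
    rw [hEC]; exact hf
  -- the operator `T`
  let T : (X → ℝ) →ₗ[ℝ] (X → ℝ) := LinearMap.funLeft ℝ ℝ (fun y => σ (w⁻¹ * y))
  have hT : ∀ f y, T f y = f (σ (w⁻¹ * y)) := fun f y => rfl
  have hTinv : ∀ J ⊆ I, ∀ f : X → ℝ, (∀ j ∈ J, ∀ y, f (y * s j) = f y) →
      ∀ j ∈ J, ∀ y, T f (y * s (π j)) = T f y := by
    intro J hJ f hf j hj y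
    rw [hT, hT, ← mul_assoc, map_mul, ← hσs j (hJ hj), hσ, hf j hj]
  let m : X → ℝ := fun x => C.symm (T (ef s D x)) x
  have hm : ∀ x, m x ≠ 0 → St (D x) := by
    intro x hx
    rw [hSt _ (hDI x)]
    by_contra hn
    apply hx
    refine hK ((D x).image π) ?_ _ ?_ x ?_
    · intro i hi
      obtain ⟨j, hj, rfl⟩ := Finset.mem_image.1 hi
      exact hπ j (hDI x hj)
    · intro i hi y
      obtain ⟨j, hj, rfl⟩ := Finset.mem_image.1 hi
      exact hTinv (D x) (hDI x) _ (fun j hj y => ef_right (le_refl _) hj y) j hj y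
    · intro hsub
      exact hn fun j hj => hsub (Finset.mem_image_of_mem π hj)
  have hsgn : ∀ u : X, C.symm (Pi.single u 1) 1 = sg u := by
    have hstep : ∀ u : X, ∀ j ∈ I, C.symm (Pi.single (u * s j) 1) 1 
        = - C.symm (Pi.single u (1 : ℝ)) 1 := by
      intro u j hj
      rw [eq_neg_iff_add_eq_zero, ← Pi.add_apply, ← map_add]
      refine hK {j} (by simpa using hj) _ ?_ 1 (by simp [hD1])
      intro i hi y
      rw [Finset.mem_singleton] at hi
      subst hi
      have e1 : y * s i = u * s i ↔ y = u := mul_left_inj _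
      have e2 : y * s i = u ↔ y = u * s i := by
        rw [← mul_left_inj (s i), mul_assoc, hinv i hj, mul_one]
      simp only [Pi.add_apply, Pi.single_apply, e1, e2]
      rw [add_comm]
    have h11 : C.symm (Pi.single (1 : X) (1 : ℝ)) 1 = 1 := by
      have : (Pi.single (1 : X) (1 : ℝ) : X → ℝ) = EE s D (Pi.single 1 1) := by
        rw [EE_single]
        funext y
        simp [ef, hD1, Pa, Pi.single_apply]
      rw [this, hCE]; simp
    have hall : ∀ v ∈ Pa s I, ∀ u, C.symm (Pi.single u 1) 1 = sg u →
        C.symm (Pi.single (u * v) 1) 1 = sg (u * v) := by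
      intro v hv
      induction hv using Subgroup.closure_induction with
      | mem x hx =>
        obtain ⟨j, hj, rfl⟩ := hx
        intro u hu
        rw [hstep u j hj, hu, sgs u j hj]
      | one => intro u hu; rwa [mul_one]
      | mul x y _ _ hx hy =>
        intro u hu
        rw [← mul_assoc]; exact hy _ (hx _ hu)
      | inv x hxm hx =>
        intro u hu
        by_contra hne
        have hfin := pow_card_eq_one (x := x)
        have hpow : ∀ n : ℕ, ∀ u, C.symm (Pi.single u 1) 1 = sg u →
            C.symm (Pi.single (u * x ^ n) 1) 1 = sg (u * x ^ n) := by
          intro n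
          induction n with
          | zero => intro u hu; rwa [pow_zero, mul_one]
          | succ n ih => intro u hu; rw [pow_succ, ← mul_assoc]; exact hx _ (ih u hu)
        apply hne
        have hxi : x⁻¹ = x ^ (Fintype.card X - 1) := by
          rw [inv_eq_iff_mul_eq_one, ← pow_succ', Nat.sub_add_cancel Fintype.card_pos, hfin]
        rw [hxi]
        exact hpow _ u hu
    intro u
    have := hall u (by rw [hgen]; trivial) 1 (by rw [h11, sg1])
    rwa [one_mul] at this
  have hm1 : m 1 = sg w := by
    rw [← hsgn w]
    show C.symm (T (ef s D 1)) 1 = _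
    suffices hTe : T (ef s D 1) = Pi.single w 1 by rw [hTe]
    funext y
    rw [hT]
    have : σ (w⁻¹ * y) = 1 ↔ y = w := by
      constructor
      · intro h
        have h' := congrArg σ h
        rw [hσ, map_one] at h'
        exact (inv_mul_eq_one.1 h').symm
      · rintro rfl; simp
    rw [map_mul, map_inv] at this
    simp [ef, hD1, Pa, Pi.single_apply, this]
  -- the trace computation
  have htr : ∀ J ⊆ I, St J → (1 / (Nat.card (Pa s J) : ℝ)) *
      ((Finset.univ.filter fun x => x⁻¹ * w * σ x ∈ Pa s J).card : ℝ)
      = ∑ x, if J ⊆ D x then m x else 0 := by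
    intro J hJ hJS
    have hJs := (hSt J hJ).1 hJS
    have hcard : (Nat.card (Pa s J) : ℝ) ≠ 0 := by
      exact_mod_cast Nat.card_pos.ne'
    have hcard' : (Nat.card (Pa s J) : ℝ) = ∑ u : X, if u ∈ Pa s J then (1 : ℝ) else 0 := by
      rw [Finset.sum_boole, Nat.card_eq_fintype_card, Fintype.card_subtype]
    let p : (X → ℝ) →ₗ[ℝ] (X → ℝ) :=
      { toFun := fun f y => (1 / (Nat.card (Pa s J) : ℝ)) * ∑ u, if u ∈ Pa s J then f (y * u) else 0
        map_add' := by
          intro f f'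
          funext y
          rw [Pi.add_apply, ← mul_add, ← Finset.sum_add_distrib]
          congr 1
          refine Finset.sum_congr rfl fun u _ => ?_
          split_ifs <;> simp
        map_smul' := by
          intro a f
          funext y
          rw [RingHom.id_apply, Pi.smul_apply, smul_eq_mul, mul_left_comm]
          congr 1
          rw [Finset.mul_sum]
          refine Finset.sum_congr rfl fun u _ => ?_
          split_ifs <;> simp }
    have hp : ∀ f y, p f y = (1 / (Nat.card (Pa s J) : ℝ)) *
        ∑ u, if u ∈ Pa s J then f (y * u) else 0 := fun f y => rfl
    have hpinv : ∀ f, ∀ j ∈ J, ∀ y, p f (y * s j) = p f y := by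
      intro f j hj y
      rw [hp, hp]
      congr 1
      rw [← Equiv.sum_comp (Equiv.mulLeft (s j)) (fun u => if u ∈ Pa s J then f (y * u) else 0)]
      refine Finset.sum_congr rfl fun u _ => ?_
      rw [Equiv.coe_mulLeft, Subgroup.mul_mem_cancel_left _ (s_mem_Pa s hj), mul_assoc]
    have hpe : ∀ x, J ⊆ D x → p (ef s D x) = ef s D x := by
      intro x hx
      funext y
      have hall : ∀ u, (if u ∈ Pa s J then ef s D x (y * u) else 0)
          = (if u ∈ Pa s J then (1 : ℝ) else 0) * ef s D x y := by
        intro u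
        by_cases hu : u ∈ Pa s J
        · have hu' : u ∈ Pa s (D x) := Subgroup.closure_mono (Set.image_mono hx) hu
          rw [if_pos hu, if_pos hu, one_mul]
          unfold ef
          rw [← mul_assoc, Subgroup.mul_mem_cancel_right _ hu']
        · simp [hu]
      rw [hp]
      simp only [hall]
      rw [← Finset.sum_mul, ← hcard', ← mul_assoc, one_div, inv_mul_cancel₀ hcard, one_mul]
    have e1 : LinearMap.trace ℝ (X → ℝ) (T ∘ₗ p) = ∑ x, if J ⊆ D x then m x else 0 := by
      have hconj := LinearMap.trace_conj' (T ∘ₗ p) C.symm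
      rw [← hconj, trace_sum]
      refine Finset.sum_congr rfl fun x _ => ?_
      have : (C.symm.conj (T ∘ₗ p)) (Pi.single x 1) = C.symm (T (p (ef s D x))) := by
        rw [LinearEquiv.conj_apply_apply, LinearEquiv.symm_symm]
        have : C (Pi.single x 1) = ef s D x := EE_single s D x
        rw [this]; rfl
      rw [this]
      split_ifs with h
      · rw [hpe x h]
      · refine hK (J.image π) ?_ _ ?_ x ?_
        · intro i hi
          obtain ⟨j, hj, rfl⟩ := Finset.mem_image.1 hi
          exact hπ j (hJ hj)
        · intro i hi y
          obtain ⟨j, hj, rfl⟩ := Finset.mem_image.1 hi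
          exact hTinv J hJ _ (hpinv _) j hj y
        · intro hsub
          apply h
          have hinjπ : J.image π = J := by
            apply Finset.eq_of_subset_of_card_le
            · intro i hi
              obtain ⟨j, hj, rfl⟩ := Finset.mem_image.1 hi
              exact hJs j hj
            · rw [Finset.card_image_of_injOn]
              intro i hi k hk hik
              have h3 := congrArg π hik
              rwa [hππ i (hJ hi), hππ k (hJ hk)] at h3
          rwa [hinjπ] at hsub
    rw [← e1, trace_sum]
    have e2 : ∀ z x : X, (∑ u, if u ∈ Pa s J then (Pi.single x (1 : ℝ) : X → ℝ) (z * u) else 0)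
        = if z⁻¹ * x ∈ Pa s J then 1 else 0 := by
      intro z x
      rw [Finset.sum_eq_single (z⁻¹ * x)]
      · simp
      · intro u _ hu
        have : z * u ≠ x := by rintro rfl; simp at hu
        simp [this]
      · simp
    have e3 : ∀ x, (T ∘ₗ p) (Pi.single x 1) x = (1 / (Nat.card (Pa s J) : ℝ)) *
        if (σ (w⁻¹ * x))⁻¹ * x ∈ Pa s J then 1 else 0 := by
      intro x
      rw [LinearMap.comp_apply, hT, hp, e2]
    simp only [e3]
    rw [← Finset.mul_sum]
    congr 1
    rw [← Finset.sum_boole]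
    refine Finset.sum_nbij' (fun x => w * σ x) (fun x => σ (w⁻¹ * x)) ?_ ?_ ?_ ?_ ?_
    · simp
    · simp
    · intro x _; simp [hσ]
    · intro x _; simp [hσ]
    · intro x _; simp [hσ, mul_assoc]
  have hfin : ∀ x, ∑ J ∈ I.powerset.filter St, ε J * (if J ⊆ D x then m x else 0)
      = if D x = ∅ then m x else 0 := by
    intro x
    by_cases hmx : m x = 0
    · simp [hmx]
    have h3 := hε (D x) (hDI x) (hm x hmx)
    have h4 : ∑ J ∈ I.powerset.filter St, ε J * (if J ⊆ D x then m x else 0)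
        = (∑ J ∈ (D x).powerset.filter St, ε J) * m x := by
      rw [Finset.sum_mul]
      symm
      apply Finset.sum_subset_zero_on_sdiff
      · intro J hJ
        rw [Finset.mem_filter, Finset.mem_powerset] at hJ ⊢
        exact ⟨hJ.1.trans (hDI x), hJ.2⟩
      · intro J hJ
        have : ¬ J ⊆ D x := by
          intro h
          simp only [Finset.mem_sdiff, Finset.mem_filter, Finset.mem_powerset] at hJ
          exact hJ.2 ⟨h, hJ.1.2⟩
        rw [if_neg this, mul_zero]
      · intro J hJ
        rw [Finset.mem_filter, Finset.mem_powerset] at hJ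
        rw [if_pos hJ.1]
    rw [h4, h3]
    split_ifs <;> simp
  have hstart : ∑ J ∈ I.powerset.filter St, ε J * ((1 / (Nat.card (Pa s J) : ℝ)) *
      ((Finset.univ.filter fun x => x⁻¹ * w * σ x ∈ Pa s J).card : ℝ))
      = ∑ J ∈ I.powerset.filter St, ∑ x, ε J * (if J ⊆ D x then m x else 0) := by
    refine Finset.sum_congr rfl fun J hJ => ?_
    rw [Finset.mem_filter, Finset.mem_powerset] at hJ
    rw [htr J hJ.1 hJ.2, Finset.mul_sum]
  rw [hstart, Finset.sum_comm, ← hm1]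
  simp only [hfin]
  rw [Finset.sum_eq_single (1 : X)]
  · rw [if_pos hD1]
  · intro x _ hx
    rw [if_neg fun h => hx (hD x h)]
  · simp

end Lefschetz

section Twist

variable [Fintype B] {cs : CoxeterSystem M W}

/-- Twisting data. -/
structure Tw (cs : CoxeterSystem M W) (L : Finset B) (g : W) (c : ℝ) (π : B → B) : Prop where
  gg : g * g = 1
  cc : c * c = 1
  pi_mem : ∀ j ∈ L, π j ∈ L
  G_al : ∀ j ∈ L, c • rho cs g (al j) = al (π j)

variable {L : Finset B} {g : W} {c : ℝ} {π : B → B}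

theorem al_inj {i j : B} (h : al i = al j) : i = j := by
  by_contra hne
  have := congrFun h i
  simp [al, hne] at this

theorem Tw.rho_g (t : Tw cs L g c π) (v : B → ℝ) : rho cs g (rho cs g v) = v := by
  rw [← rho_mul_apply, t.gg, map_one]; rfl

theorem Tw.pi_pi (t : Tw cs L g c π) {j : B} (hj : j ∈ L) : π (π j) = j := by
  apply al_inj
  rw [← t.G_al _ (t.pi_mem j hj), ← t.G_al j hj, map_smul, smul_smul, t.cc, one_smul, t.rho_g]

theorem Tw.rho_al (t : Tw cs L g c π) {j : B} (hj : j ∈ L) : rho cs g (al j) = c • al (π j) := by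
  rw [← t.G_al j hj, smul_smul, t.cc, one_smul]

theorem Tw.conj (t : Tw cs L g c π) {j : B} (hj : j ∈ L) :
    g * cs.simple j * g = cs.simple (π j) := by
  have h : g * cs.simple j * g * cs.simple (π j) = 1 := by
    apply rho_inj cs
    intro v
    have key : ∀ u, rho cs (g * cs.simple j * g) u = rho cs (cs.simple (π j)) u := by
      intro u
      rw [rho_mul_apply, rho_mul_apply, rho_simple_apply, rho_simple_apply, map_sub, t.rho_g, map_smul,
        t.rho_al hj]
      congr 1
      have : fd M j (rho cs g u) = c * fd M (π j) u := by
        rw [← bf_al_left, ← bf_rho (cs := cs) g, t.rho_g, t.rho_al hj, bf_smul_left, bf_al_left]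
      rw [this, smul_smul, mul_right_comm, t.cc, one_mul]
    rw [rho_mul_apply, key, rho_simple_simple]
  rw [← mul_left_inj (cs.simple (π j)), h, cs.simple_mul_simple_self]

theorem conj_mul (hg : g * g = 1) (x y : W) : g * (x * y) * g = (g * x * g) * (g * y * g) := by
  have : g * x * g * (g * y * g) = g * x * (g * g) * y * g := by group
  rw [this, hg]; group

theorem conj_conj (hg : g * g = 1) (x : W) : g * (g * x * g) * g = x := by
  have : g * (g * x * g) * g = (g * g) * x * (g * g) := by group
  rw [this, hg]; group

theorem Tw.conj_mem (t : Tw cs L g c π) {J : Finset B} (hJ : J ⊆ L) (hs : ∀ j ∈ J, π j ∈ J)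
    {x : W} (hx : x ∈ WP cs J) : g * x * g ∈ WP cs J := by
  induction hx using Subgroup.closure_induction with
  | mem x hx =>
    obtain ⟨j, hj, rfl⟩ := hx
    rw [t.conj (hJ hj)]; exact simple_mem_WP (hs j hj)
  | one => rw [mul_one, t.gg]; exact one_mem _
  | mul x y _ _ hx hy => rw [conj_mul t.gg]; exact mul_mem hx hy
  | inv x _ hx =>
    have hgi : g⁻¹ = g := inv_eq_of_mul_eq_one_left t.gg
    have := inv_mem hx
    rwa [mul_inv_rev, mul_inv_rev, hgi, ← mul_assoc] at this

theorem Tw.G_nonneg (t : Tw cs L g c π) {v : B → ℝ} (hv : 0 ≤ v) (hs : ∀ i, i ∉ L → v i = 0) :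
    0 ≤ c • rho cs g v := by
  rw [vec_sum v, map_sum, Finset.smul_sum]
  apply Finset.sum_nonneg
  intro i _
  by_cases hi : i ∈ L
  · rw [map_smul, smul_comm, t.G_al i hi]
    exact smul_nonneg (hv i) (al_nonneg _)
  · rw [hs i hi]; simp

theorem Tw.desc (t : Tw cs L g c π) {x : W} (hx : x ∈ WP cs L) {j : B} (hj : j ∈ L) :
    cs.IsRightDescent (g * x * g) (π j) ↔ cs.IsRightDescent x j := by
  have e : rho cs (g * x * g) (al (π j)) = c • rho cs g (rho cs x (al j)) := by
    rw [rho_mul_apply, rho_mul_apply, t.rho_al (t.pi_mem j hj), t.pi_pi hj, map_smul, map_smul]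
  constructor
  · intro h
    by_contra hn
    rw [not_desc_iff] at hn
    rw [desc_iff, e] at h
    have h3 := t.G_nonneg hn (fun i hi => rho_al_off hx hj i hi)
    have h4 := le_antisymm h h3
    rw [← e] at h4
    exact rho_ne_zero cs _ (al_ne_zero _) h4
  · intro h
    rw [desc_iff] at h ⊢
    rw [e]
    have h3 := t.G_nonneg (v := - rho cs x (al j)) (neg_nonneg.2 h) (fun i hi => by
      rw [Pi.neg_apply, rho_al_off hx hj i hi, neg_zero])
    rw [map_neg, smul_neg] at h3
    exact neg_nonneg.1 h3

theorem Tw.length (t : Tw cs L g c π) {x : W} (hx : x ∈ WP cs L) :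
    cs.length (g * x * g) = cs.length x := by
  refine WP_induction (p := fun x => cs.length (g * x * g) = cs.length x) ?_ ?_ hx
  · rw [mul_one, t.gg]
  · intro z hz j hj hd ih
    have hd' : ¬ cs.IsRightDescent (g * z * g) (π j) := by rwa [t.desc hz hj]
    rw [conj_mul t.gg, t.conj hj, cs.not_isRightDescent_iff.1 hd', cs.not_isRightDescent_iff.1 hd, ih]

variable (cs) in
/-- The twisting operator. -/
def GG (g : W) (c : ℝ) : (B → ℝ) →ₗ[ℝ] (B → ℝ) := c • rl cs g

theorem GG_apply (v : B → ℝ) : GG cs g c v = c • rho cs g v := rfl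

theorem Tw.GG_GG (t : Tw cs L g c π) (v : B → ℝ) : GG cs g c (GG cs g c v) = v := by
  rw [GG_apply, GG_apply, map_smul, smul_smul, t.cc, one_smul, t.rho_g]

theorem Tw.GG_rl (t : Tw cs L g c π) (x : W) :
    GG cs g c ∘ₗ rl cs x = rl cs (g * x * g) ∘ₗ GG cs g c := by
  apply LinearMap.ext
  intro v
  rw [LinearMap.comp_apply, LinearMap.comp_apply, GG_apply, GG_apply, rl_apply, rl_apply, map_smul,
    ← rho_mul_apply, ← rho_mul_apply, mul_assoc, t.gg, mul_one]

theorem Tw.GG_Phi (t : Tw cs L g c π) {I : Finset B} (hI : I ⊆ L) (hs : ∀ j ∈ I, π j ∈ I)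
    [Finite (WP cs I)] {v : B → ℝ} (hv : v ∈ Phi cs I) : GG cs g c v ∈ Phi cs I := by
  obtain ⟨h0, w, hw, j, hj, rfl⟩ := mem_Phi.1 hv
  refine mem_Phi.2 ⟨?_, g * w * g, t.conj_mem hI hs hw, π j, hs j hj, ?_⟩
  · exact t.G_nonneg h0 (fun i hi => Phi_off hv i fun h => hi (hI h))
  · have := LinearMap.congr_fun (t.GG_rl w) (al j)
    rw [LinearMap.comp_apply, LinearMap.comp_apply, GG_apply (v := al j), t.G_al j (hI hj)] at this
    exact this

theorem Tw.GG_Dl (t : Tw cs L g c π) {I : Finset B} (hI : I ⊆ L) (hs : ∀ j ∈ I, π j ∈ I)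
    [Finite (WP cs I)] : sy (GG cs g c) (Dl cs I) = Dl cs I := by
  rw [Dl, map_prod]
  refine Finset.prod_nbij' (GG cs g c) (GG cs g c) ?_ ?_ ?_ ?_ ?_
  · intro v hv; exact t.GG_Phi hI hs hv
  · intro v hv; exact t.GG_Phi hI hs hv
  · intro v _; exact t.GG_GG v
  · intro v _; exact t.GG_GG v
  · intro v _; rw [sy_lin]

/-- Stable subsets. -/
def St (π : B → B) (J : Finset B) : Prop := ∀ j ∈ J, π j ∈ J

/-- The Lefschetz identity for `W_I`. -/
theorem Tw.lef (t : Tw cs L g c π) {I : Finset B} (hI : I ⊆ L) (hs : St π I)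
    [Finite (WP cs I)] (ε : Finset B → ℝ)
    (hε : ∀ K ⊆ I, St π K → ∑ J ∈ K.powerset.filter (St π), ε J = if K = ∅ then 1 else 0)
    {w : W} (hw : w ∈ WP cs I) :
    ∑ J ∈ I.powerset.filter (St π), ε J * ((1 / ((WF cs J).card : ℝ)) *
      (((WF cs I).filter fun x => x⁻¹ * w * (g * x * g) ∈ WF cs J).card : ℝ)) = sgn cs w := by
  have : Fintype (WP cs I) := Fintype.ofFinite _
  let s : B → WP cs I := fun j => if h : j ∈ I then ⟨cs.simple j, simple_mem_WP h⟩ else 1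
  have hsj : ∀ j, j ∈ I → (s j : W) = cs.simple j := by
    intro j hj; simp [s, hj]
  let D : WP cs I → Finset B := fun x => I.filter fun j => cs.IsRightDescent (x : W) j
  let len : WP cs I → ℕ := fun x => cs.length (x : W)
  let σ : WP cs I →* WP cs I :=
    { toFun := fun x => ⟨g * x * g, t.conj_mem hI hs x.2⟩
      map_one' := by ext; simp [t.gg]
      map_mul' := fun x y => by ext; simp [conj_mul t.gg] }
  have hσ : ∀ x, ((σ x : WP cs I) : W) = g * x * g := fun x => rfl
  have hPa : ∀ J ⊆ I, ∀ x : WP cs I, x ∈ Pa s J ↔ (x : W) ∈ WP cs J := by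
    intro J hJ x
    have hmap : (Pa s J).map (WP cs I).subtype = WP cs J := by
      rw [Pa, MonoidHom.map_closure, ← Set.image_comp]
      show _ = Subgroup.closure (cs.simple '' (J : Set B))
      congr 1
      apply Set.image_congr
      intro j hj
      exact hsj j (hJ hj)
    rw [← hmap]
    constructor
    · intro h; exact ⟨x, h, rfl⟩
    · rintro ⟨y, hy, hxy⟩
      have : y = x := Subtype.ext hxy
      rwa [← this]
  have hfinJ : ∀ J ⊆ I, Finite (WP cs J) := by
    intro J hJ
    exact Set.Finite.subset (s := (WP cs I : Set W)) (Set.toFinite _) (WP_mono hJ)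
  have key := lefschetz (s := s) (D := D) (len := len) ?_ (I := I) ?_ ?_ ?_ ?_ σ ?_ π hs ?_ ?_
    (fun x => sgn cs (x : W)) ?_ ?_ ?_ ?_ ε (St π) (fun J _ => Iff.rfl) hε ⟨w, hw⟩
  · rw [← key]
    refine Finset.sum_congr rfl fun J hJ => ?_
    rw [Finset.mem_filter, Finset.mem_powerset] at hJ
    have := hfinJ J hJ.1
    congr 2
    · congr 2
      rw [Nat.card_eq_fintype_card, Fintype.card_subtype, ← Finset.card_map (Function.Embedding.subtype _)]
      congr 1
      ext x
      simp only [mem_WF, Finset.mem_map, Finset.mem_filter, Finset.mem_univ, true_and]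
      constructor
      · intro hx
        exact ⟨⟨x, WP_mono hJ.1 hx⟩, (hPa J hJ.1 _).2 hx, rfl⟩
      · rintro ⟨y, hy, rfl⟩
        exact (hPa J hJ.1 y).1 hy
    · congr 1
      rw [← Finset.card_map (Function.Embedding.subtype _)]
      congr 1
      ext x
      simp only [mem_WF, Finset.mem_map, Finset.mem_filter, Finset.mem_univ, true_and]
      constructor
      · rintro ⟨hx, hx'⟩
        exact ⟨⟨x, hx⟩, (hPa J hJ.1 _).2 hx', rfl⟩
      · rintro ⟨y, hy, rfl⟩
        exact ⟨y.2, (hPa J hJ.1 _).1 hy⟩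
  · intro x z hz hz1
    have hz' := (hPa _ (Finset.filter_subset _ _) z).1 hz
    have h := length_sub (cs := cs) (J := D x) (x := x) (fun j hj => (Finset.mem_filter.1 hj).2) hz'
    have hz0 : cs.length (z : W) ≠ 0 := by
      rw [Ne, cs.length_eq_zero_iff]
      intro h'; exact hz1 (Subtype.ext h')
    show cs.length ((x : W) * z) < cs.length (x : W)
    omega
  · intro x j hj hjD
    have : ¬ cs.IsRightDescent (x : W) j := fun h => hjD (Finset.mem_filter.2 ⟨hj, h⟩)
    show cs.length (x : W) < cs.length ((x : W) * s j)
    rw [hsj j hj, cs.not_isRightDescent_iff.1 this]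
    omega
  · intro x; exact Finset.filter_subset _ _
  · intro x hx
    by_contra hne
    obtain ⟨j, hj, hd⟩ := exists_desc x.2 (fun h => hne (Subtype.ext h))
    have : j ∈ D x := Finset.mem_filter.2 ⟨hj, hd⟩
    rw [hx] at this
    simp at this
  · rw [Finset.filter_eq_empty_iff]
    intro j _
    show ¬ cs.IsRightDescent (1 : W) j
    exact (not_desc_iff cs).2 (by rw [map_one]; exact al_nonneg j)
  · intro x; ext; rw [hσ, hσ, conj_conj t.gg]
  · intro j hj; exact t.pi_pi (hI hj)
  · intro j hj
    ext
    rw [hσ, hsj j hj, hsj _ (hs j hj), t.conj (hI hj)]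
  · exact sgn_one
  · intro x j hj
    show sgn cs ((x : W) * s j) = _
    rw [hsj j hj, sgn_mul, sgn_simple]; ring
  · rw [eq_top_iff]
    intro x _
    exact (hPa I (le_refl _) x).2 x.2
  · intro j hj
    ext
    show (s j : W) * s j = 1
    rw [hsj j hj, cs.simple_mul_simple_self]

end Twist

section Final

variable [Fintype B] {cs : CoxeterSystem M W}

/-- Coefficients inverting the zeta function of the poset of stable subsets. -/
def eps (π : B → B) (K : Finset B) : ℝ :=
  (if K = ∅ then 1 else 0) - ∑ J ∈ (K.ssubsets.filter (St π)).attach, eps π J.1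
termination_by K.card
decreasing_by
  exact Finset.card_lt_card (Finset.mem_ssubsets.1 (Finset.mem_filter.1 J.2).1)

theorem eps_spec (π : B → B) {K : Finset B} (hK : St π K) :
    ∑ J ∈ K.powerset.filter (St π), eps π J = if K = ∅ then 1 else 0 := by
  have h1 : K.powerset.filter (St π) = insert K (K.ssubsets.filter (St π)) := by
    ext J
    simp only [Finset.mem_filter, Finset.mem_powerset, Finset.mem_insert, Finset.mem_ssubsets]
    constructor
    · rintro ⟨h, h'⟩
      rcases eq_or_ssubset_of_subset h with h2 | h2
      · exact Or.inl h2
      · exact Or.inr ⟨h2, h'⟩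
    · rintro (rfl | ⟨h, h'⟩)
      · exact ⟨le_refl _, hK⟩
      · exact ⟨h.subset, h'⟩
  rw [h1, Finset.sum_insert (by simp), eps, Finset.sum_attach _ (fun J => eps π J)]
  ring

variable {L : Finset B} {g : W} {c : ℝ} {π : B → B}

theorem WP_fin {J I : Finset B} (h : J ⊆ I) (hI : Finite (WP cs I)) : Finite (WP cs J) :=
  Set.Finite.subset (s := (WP cs I : Set W)) (Set.toFinite _) (WP_mono h)

variable (cs) in
/-- Averaged (twisted) Molien series. -/
def av (g : W) (c : ℝ) (J : Finset B) : PowerSeries ℝ :=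
  (1 / ((WF cs J).card : ℝ)) • ∑ v ∈ WF cs J, hs (rl cs v ∘ₗ GG cs g c)

theorem WF_card_ne (J : Finset B) [Finite (WP cs J)] : ((WF cs J).card : ℝ) ≠ 0 := by
  have : (WF cs J).Nonempty := ⟨1, mem_WF.2 (one_mem _)⟩
  exact_mod_cast this.card_pos.ne'

theorem Tw.cong (t : Tw cs L g c π) {I J : Finset B} (hI : I ⊆ L) (hs' : St π I) (hJ : J ⊆ I)
    [hfin : Finite (WP cs I)] :
    ∑ w ∈ WF cs I, (((WF cs I).filter fun x => x⁻¹ * w * (g * x * g) ∈ WF cs J).card : ℝ) •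
      hs (rl cs w ∘ₗ GG cs g c) =
    ((WF cs I).card : ℝ) • ∑ v ∈ WF cs J, hs (rl cs v ∘ₗ GG cs g c) := by
  have hfJ := WP_fin hJ hfin
  have h1 : ∀ w ∈ WF cs I,
      (((WF cs I).filter fun x => x⁻¹ * w * (g * x * g) ∈ WF cs J).card : ℝ) •
      hs (rl cs w ∘ₗ GG cs g c) = ∑ x ∈ WF cs I, if x⁻¹ * w * (g * x * g) ∈ WF cs J then
        hs (rl cs w ∘ₗ GG cs g c) else 0 := by
    intro w _
    rw [← Finset.sum_filter, Finset.sum_const, Nat.cast_smul_eq_nsmul]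
  rw [Finset.sum_congr rfl h1, Finset.sum_comm, Nat.cast_smul_eq_nsmul, ← Finset.sum_const]
  refine Finset.sum_congr rfl fun x hx => ?_
  rw [← Finset.sum_filter]
  have hxm := mem_WF.1 hx
  have hsx := t.conj_mem hI hs' hxm
  refine Finset.sum_nbij' (fun w => x⁻¹ * w * (g * x * g)) (fun v => x * v * (g * x * g)⁻¹)
    ?_ ?_ ?_ ?_ ?_
  · intro w hw; exact (Finset.mem_filter.1 hw).2
  · intro v hv
    refine Finset.mem_filter.2 ⟨mem_WF.2 ?_, ?_⟩
    · exact mul_mem (mul_mem hxm (WP_mono hJ (mem_WF.1 hv))) (inv_mem hsx)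
    · have : x⁻¹ * (x * v * (g * x * g)⁻¹) * (g * x * g) = v := by group
      rwa [this]
  · intro w _; group
  · intro v _; group
  · intro w _
    have e : rl cs (x⁻¹ * w * (g * x * g)) ∘ₗ GG cs g c =
        rl cs x⁻¹ ∘ₗ ((rl cs w ∘ₗ GG cs g c) ∘ₗ rl cs x) := by
      rw [LinearMap.comp_assoc, t.GG_rl, mul_assoc, rl_mul, rl_mul]; rfl
    have e2 : ((rl cs w ∘ₗ GG cs g c) ∘ₗ rl cs x) ∘ₗ rl cs x⁻¹ = rl cs w ∘ₗ GG cs g c := by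
      rw [LinearMap.comp_assoc, ← rl_mul, mul_inv_cancel, rl_one, LinearMap.comp_id]
    rw [e, hs_comm (rl cs x⁻¹), e2]

theorem Tw.E1 (t : Tw cs L g c π) {I : Finset B} (hI : I ⊆ L) (hs' : St π I)
    [hfin : Finite (WP cs I)] :
    ∑ J ∈ I.powerset.filter (St π), eps π J • av cs g c J =
      PowerSeries.X ^ (Phi cs I).card * av cs g c I := by
  have hm := molien (cs := cs) (I := I) (GG cs g c) (t.GG_Dl hI hs')
  have h2 : ∑ w ∈ WF cs I, sgn cs w • hs (rl cs w ∘ₗ GG cs g c) =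
      ((WF cs I).card : ℝ) • ∑ J ∈ I.powerset.filter (St π), eps π J • av cs g c J := by
    have : ∀ w ∈ WF cs I, sgn cs w • hs (rl cs w ∘ₗ GG cs g c) =
        ∑ J ∈ I.powerset.filter (St π), (eps π J * (1 / ((WF cs J).card : ℝ))) •
         ((((WF cs I).filter fun x => x⁻¹ * w * (g * x * g) ∈ WF cs J).card : ℝ) •
          hs (rl cs w ∘ₗ GG cs g c)) := by
      intro w hw
      rw [← t.lef hI hs' (eps π) (fun K _ h => eps_spec π h) (mem_WF.1 hw), Finset.sum_smul]
      refine Finset.sum_congr rfl fun J _ => ?_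
      rw [smul_smul, mul_assoc]
    rw [Finset.sum_congr rfl this, Finset.sum_comm, Finset.smul_sum]
    refine Finset.sum_congr rfl fun J hJ => ?_
    rw [← Finset.smul_sum, t.cong hI hs' (Finset.mem_powerset.1 (Finset.mem_filter.1 hJ).1), av,
      smul_smul, smul_smul, smul_smul]
    congr 1
    ring
  have hc := WF_card_ne (cs := cs) I
  rw [h2] at hm
  have h3 := congrArg (fun f => (1 / ((WF cs I).card : ℝ)) • f) hm
  simp only [smul_smul] at h3
  rw [one_div_mul_cancel hc, one_smul] at h3
  rw [h3, av, mul_smul_comm]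

variable (cs) in
/-- Twisted Poincaré series. -/
def PP (g : W) (J : Finset B) : PowerSeries ℝ :=
  ∑ x ∈ (WF cs J).filter (fun x => g * x * g = x), PowerSeries.X ^ cs.length x

variable (cs) in
/-- Twisted Poincaré series of minimal coset representatives. -/
def QQ (g : W) (I J : Finset B) : PowerSeries ℝ :=
  ∑ x ∈ (WF cs I).filter (fun x => g * x * g = x ∧ ∀ j ∈ J, ¬ cs.IsRightDescent x j),
    PowerSeries.X ^ cs.length x

theorem Tw.QP (t : Tw cs L g c π) {I J : Finset B} (hI : I ⊆ L) (hJI : J ⊆ I) (hs' : St π J)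
    [hfin : Finite (WP cs I)] : QQ cs g I J * PP cs g J = PP cs g I := by
  have hfJ := WP_fin hJI hfin
  rw [QQ, PP, PP, Finset.sum_mul_sum, ← Finset.sum_product']
  refine Finset.sum_bij (fun p _ => p.1 * p.2) ?_ ?_ ?_ ?_
  · rintro ⟨y, z⟩ hp
    simp only [Finset.mem_product, Finset.mem_filter, mem_WF] at hp ⊢
    refine ⟨mul_mem hp.1.1 (WP_mono hJI hp.2.1), ?_⟩
    rw [conj_mul t.gg, hp.1.2.1, hp.2.2]
  · rintro ⟨y, z⟩ hp ⟨y', z'⟩ hp' h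
    simp only [Finset.mem_product, Finset.mem_filter, mem_WF] at hp hp' h
    have hy : y' = y * (z * z'⁻¹) := by rw [← mul_assoc, h]; group
    have hu := min_unique hp.1.2.2 (mul_mem hp.2.1 (inv_mem hp'.2.1)) (by rw [← hy]; exact hp'.1.2.2)
    rw [hu, mul_one] at hy
    have hz : z = z' := by rwa [mul_inv_eq_one] at hu
    rw [hy, hz]
  · intro x hx
    simp only [Finset.mem_filter, mem_WF] at hx
    obtain ⟨z, hz, hd⟩ := exists_min (cs := cs) J x
    have hyI : x * z ∈ WP cs I := mul_mem hx.1 (WP_mono hJI hz)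
    have hσz := t.conj_mem (hJI.trans hI) hs' hz
    have e : g * (x * z) * g = (x * z) * (z⁻¹ * (g * z * g)) := by
      rw [conj_mul t.gg, hx.2]; group
    have hu := min_unique hd (mul_mem (inv_mem hz) hσz) (by
      rw [← e]
      intro j hj
      have hjL := hI (hJI hj)
      rw [← t.pi_pi hjL, t.desc (WP_mono hI hyI) (t.pi_mem j hjL)]
      exact hd _ (hs' j hj))
    have hzz : g * z * g = z := (inv_mul_eq_one.1 hu).symm
    rw [hu, mul_one] at e
    refine ⟨(x * z, z⁻¹), ?_, by simp⟩
    simp only [Finset.mem_product, Finset.mem_filter, mem_WF]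
    refine ⟨⟨hyI, e, hd⟩, inv_mem hz, ?_⟩
    have hgi : g⁻¹ = g := inv_eq_of_mul_eq_one_left t.gg
    have := congrArg (fun x => x⁻¹) hzz
    simp only [mul_inv_rev, hgi] at this
    rwa [mul_assoc]
  · rintro ⟨y, z⟩ hp
    simp only [Finset.mem_product, Finset.mem_filter, mem_WF] at hp
    rw [length_add hp.1.2.2 hp.2.1, pow_add]

theorem Tw.QQ_self (t : Tw cs L g c π) {I : Finset B} [hfin : Finite (WP cs I)] :
    QQ cs g I I = 1 := by
  rw [QQ, Finset.sum_eq_single_of_mem 1]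
  · simp
  · simp only [Finset.mem_filter, mem_WF]
    refine ⟨one_mem _, by rw [mul_one, t.gg], fun j _ => ?_⟩
    exact (not_desc_iff cs).2 (by rw [map_one]; exact al_nonneg j)
  · intro x hx hne
    simp only [Finset.mem_filter, mem_WF] at hx
    obtain ⟨j, hj, hd⟩ := exists_desc hx.1 hne
    exact absurd hd (hx.2.2 j hj)

theorem Tw.E2 (t : Tw cs L g c π) {I : Finset B} (hI : I ⊆ L) (hs' : St π I)
    [hfin : Finite (WP cs I)] :
    ∑ J ∈ I.powerset.filter (St π), eps π J • QQ cs g I J = PowerSeries.X ^ (Phi cs I).card := by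
  have h1 : ∀ J ∈ I.powerset.filter (St π), eps π J • QQ cs g I J =
      ∑ x ∈ (WF cs I).filter (fun x => g * x * g = x),
        if (∀ j ∈ J, ¬ cs.IsRightDescent x j) then
          eps π J • (PowerSeries.X : PowerSeries ℝ) ^ cs.length x else 0 := by
    intro J _
    rw [← Finset.sum_filter, Finset.filter_filter, QQ, Finset.smul_sum]
  rw [Finset.sum_congr rfl h1, Finset.sum_comm]
  have h2 : ∀ x ∈ (WF cs I).filter (fun x => g * x * g = x),
      (∑ J ∈ I.powerset.filter (St π), if (∀ j ∈ J, ¬ cs.IsRightDescent x j) then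
          eps π J • (PowerSeries.X : PowerSeries ℝ) ^ cs.length x else 0) =
      if (∀ j ∈ I, cs.IsRightDescent x j) then PowerSeries.X ^ cs.length x else 0 := by
    intro x hx
    simp only [Finset.mem_filter, mem_WF] at hx
    rw [← Finset.sum_filter, ← Finset.sum_smul]
    have hK : St π (I.filter fun j => ¬ cs.IsRightDescent x j) := by
      intro j hj
      rw [Finset.mem_filter] at hj ⊢
      refine ⟨hs' j hj.1, ?_⟩
      rw [← hx.2, t.desc (WP_mono hI hx.1) (hI hj.1)]
      exact hj.2
    have hf : (I.powerset.filter (St π)).filter (fun J => ∀ j ∈ J, ¬ cs.IsRightDescent x j) =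
        (I.filter fun j => ¬ cs.IsRightDescent x j).powerset.filter (St π) := by
      ext J
      simp only [Finset.mem_filter, Finset.mem_powerset, Finset.subset_iff]
      constructor
      · rintro ⟨⟨h1, h2⟩, h3⟩
        exact ⟨fun j hj => ⟨h1 hj, h3 j hj⟩, h2⟩
      · rintro ⟨h1, h2⟩
        exact ⟨⟨fun j hj => (h1 hj).1, h2⟩, fun j hj => (h1 hj).2⟩
    rw [hf, eps_spec π hK]
    have hiff : (I.filter fun j => ¬ cs.IsRightDescent x j) = ∅ ↔ ∀ j ∈ I, cs.IsRightDescent x j := by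
      rw [Finset.filter_eq_empty_iff]
      simp only [not_not]
    by_cases h : ∀ j ∈ I, cs.IsRightDescent x j
    · rw [if_pos h, if_pos (hiff.2 h), one_smul]
    · rw [if_neg h, if_neg (fun h' => h (hiff.1 h')), zero_smul]
  rw [Finset.sum_congr rfl h2]
  obtain ⟨x, hx, hd⟩ := exists_max (cs := cs) I
  have hσx : g * x * g = x := by
    refine max_unique (t.conj_mem hI hs' hx) hx (fun j hj => ?_) hd
    rw [← t.pi_pi (hI hj), t.desc (WP_mono hI hx) (t.pi_mem j (hI hj))]
    exact hd _ (hs' j hj)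
  have hxm : x ∈ (WF cs I).filter (fun x => g * x * g = x) :=
    Finset.mem_filter.2 ⟨mem_WF.2 hx, hσx⟩
  rw [Finset.sum_eq_single_of_mem x hxm, if_pos hd, card_Phi hx hd]
  intro y hy hne
  rw [if_neg]
  intro hd'
  exact hne (max_unique (mem_WF.1 (Finset.mem_filter.1 hy).1) hx hd' hd)

theorem WF_empty : WF cs (∅ : Finset B) = {1} := by
  have hf : Finite (WP cs (∅ : Finset B)) := by
    have : WP cs (∅ : Finset B) = ⊥ := by simp [WP]
    rw [this]; infer_instance
  ext x
  rw [mem_WF]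
  simp [WP]

theorem Tw.main (t : Tw cs L g c π) (n : ℕ) : ∀ {I : Finset B} (hI : I ⊆ L) (hs' : St π I)
    (hfin : Finite (WP cs I)), I.card = n → av cs g c I * PP cs g I = hs (GG cs g c) := by
  induction n using Nat.strong_induction_on with
  | _ n ih =>
  intro I hI hs' hfin hn
  rcases Finset.eq_empty_or_nonempty I with rfl | hne
  · rw [av, PP, WF_empty]
    have : ({1} : Finset W).filter (fun x => g * x * g = x) = {1} := by
      rw [Finset.filter_eq_self]
      intro x hx
      rw [Finset.mem_singleton.1 hx, mul_one, t.gg]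
    rw [this]
    simp [rl_one]
  · have e1 := t.E1 hI hs'
    have e2 := t.E2 hI hs'
    have hmem : I ∈ I.powerset.filter (St π) :=
      Finset.mem_filter.2 ⟨Finset.mem_powerset.2 (le_refl _), hs'⟩
    have e1' := congrArg (fun f => f * PP cs g I) e1
    have e2' := congrArg (fun f => f * hs (GG cs g c)) e2
    simp only [Finset.sum_mul, smul_mul_assoc] at e1' e2'
    rw [← Finset.add_sum_erase _ _ hmem] at e1' e2'
    have hrest : ∑ J ∈ (I.powerset.filter (St π)).erase I, eps π J • (av cs g c J * PP cs g I) =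
        ∑ J ∈ (I.powerset.filter (St π)).erase I, eps π J • (QQ cs g I J * hs (GG cs g c)) := by
      refine Finset.sum_congr rfl fun J hJ => ?_
      rw [Finset.mem_erase, Finset.mem_filter, Finset.mem_powerset] at hJ
      have hlt : J.card < n := by
        rw [← hn]
        exact Finset.card_lt_card (Finset.ssubset_iff_subset_ne.2 ⟨hJ.2.1, hJ.1⟩)
      rw [← ih _ hlt (hJ.2.1.trans hI) hJ.2.2 (WP_fin hJ.2.1 hfin) rfl, ← t.QP hI hJ.2.1 hJ.2.2]
      congr 1
      ring
    rw [hrest] at e1'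
    rw [t.QQ_self, one_mul] at e2'
    have key : (PowerSeries.C (eps π I) - PowerSeries.X ^ (Phi cs I).card) *
        (av cs g c I * PP cs g I - hs (GG cs g c)) = 0 := by
      rw [PowerSeries.smul_eq_C_mul] at e1' e2'
      linear_combination e1' - e2'
    rcases mul_eq_zero.1 key with h | h
    · exfalso
      have hpos : (Phi cs I).card ≠ 0 := by
        obtain ⟨i, hi⟩ := hne
        exact Finset.card_ne_zero_of_mem (al_mem_Phi hi)
      have := congrArg (PowerSeries.coeff (Phi cs I).card) h
      rw [map_sub, PowerSeries.coeff_C, if_neg hpos, PowerSeries.coeff_X_pow, if_pos rfl] at this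
      simp at this
    · exact sub_eq_zero.1 h

end Final

section Poly

open Polynomial

theorem ord_unique {f h : ℤ[X]} (hf : f.eval 1 ≠ 0) (hh : h.eval 1 ≠ 0) {a n : ℕ}
    (e : f * (1 - X) ^ a = h * (1 - X) ^ n) : a = n := by
  have aux : ∀ {f h : ℤ[X]}, f.eval 1 ≠ 0 → ∀ {a n : ℕ}, a < n →
      f * (1 - X) ^ a = h * (1 - X) ^ n → False := by
    intro f h hf a n han e
    obtain ⟨d, rfl⟩ := Nat.exists_eq_add_of_lt han
    have hne : ((1 : ℤ[X]) - X) ^ a ≠ 0 := by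
      apply pow_ne_zero
      intro h0
      have := congrArg (Polynomial.eval 0) h0
      simp at this
    have e2 : f = h * (1 - X) ^ (d + 1) := by
      apply mul_right_cancel₀ hne
      rw [e]; ring
    apply hf
    rw [e2]; simp
  rcases lt_trichotomy a n with h1 | h1 | h1
  · exact (aux hf h1 e).elim
  · exact h1
  · exact (aux hh h1 e.symm).elim

theorem odd_fac (m : ℕ) : ∑ j ∈ Finset.range (2 * m + 1 + 1), (-X : ℤ[X]) ^ j =
    (1 - X) * ∑ i ∈ Finset.range (m + 1), X ^ (2 * i) := by
  induction m with
  | zero => simp [Finset.sum_range_succ]; ring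
  | succ m ih =>
    rw [show 2 * (m + 1) + 1 + 1 = 2 * m + 1 + 1 + 1 + 1 by ring, Finset.sum_range_succ,
      Finset.sum_range_succ, ih, Finset.sum_range_succ _ (m + 1)]
    have h1 : (-X : ℤ[X]) ^ (2 * m + 1 + 1) = X ^ (2 * (m + 1)) := by
      rw [show 2 * m + 1 + 1 = 2 * (m + 1) by ring, Even.neg_pow (by simp)]
    rw [pow_succ (-X : ℤ[X]) (2 * m + 1 + 1), h1]
    ring

theorem fac (e : ℕ) : ∃ h : ℤ[X], h.eval 1 ≠ 0 ∧
    ∑ j ∈ Finset.range (e + 1), (-X : ℤ[X]) ^ j = h * (1 - X) ^ (if Odd e then 1 else 0) := by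
  by_cases ho : Odd e
  · obtain ⟨m, rfl⟩ := ho
    refine ⟨∑ i ∈ Finset.range (m + 1), X ^ (2 * i), ?_, ?_⟩
    · simp [Polynomial.eval_finsetSum]
      omega
    · rw [odd_fac, if_pos (by simp), pow_one, mul_comm]
  · refine ⟨_, ?_, by rw [if_neg ho, pow_zero, mul_one]⟩
    rw [Polynomial.eval_finsetSum]
    simp only [eval_pow, eval_neg, eval_X]
    rw [neg_one_geom_sum, if_neg]
    · simp
    · rw [Nat.even_add_one]; simpa using ho

theorem fac_prod {k : ℕ} (ex : Fin k → ℕ) : ∃ h : ℤ[X], h.eval 1 ≠ 0 ∧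
    ∏ i : Fin k, ∑ j ∈ Finset.range (ex i + 1), (-X : ℤ[X]) ^ j =
      h * (1 - X) ^ (Finset.univ.filter fun i => Odd (ex i)).card := by
  choose h h1 h2 using fun i => fac (ex i)
  refine ⟨∏ i, h i, ?_, ?_⟩
  · rw [Polynomial.eval_prod]
    exact Finset.prod_ne_zero_iff.2 fun i _ => h1 i
  · rw [Finset.prod_congr rfl fun i _ => h2 i, Finset.prod_mul_distrib, Finset.prod_pow_eq_pow_sum,
      Finset.card_filter]

/-- From integral polynomials to real power series. -/
def toPS : ℤ[X] →+* PowerSeries ℝ :=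
  (Polynomial.coeToPowerSeries.ringHom).comp (Polynomial.mapRingHom (Int.castRingHom ℝ))

theorem toPS_X : toPS X = PowerSeries.X := by
  simp [toPS]

theorem toPS_inj : Function.Injective toPS := by
  intro f h e
  have := Polynomial.coe_injective ℝ e
  exact Polynomial.map_injective _ (RingHom.injective_int _) this

variable [Fintype B] {cs : CoxeterSystem M W}

theorem exists_a {I : Finset B} (hfin : Finite (WP cs I)) {wL : W} (hw : wL ∈ WP cs I)
    (hm : ∀ u ∈ WP cs I, cs.length u ≤ cs.length wL) : ∃ a : ℕ,
    (∑ x ∈ (WF cs I).filter (fun x => wL * x * wL = x), (X : ℤ[X]) ^ cs.length x) * (1 - X) ^ a =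
    (∑ x ∈ WF cs I, (-X : ℤ[X]) ^ cs.length x) * (1 + X) ^ a := by
  have hww := wL_inv hw hm
  let π : B → B := fun j => if h : j ∈ I then (wL_perm hw hm h).choose else j
  have hπ : ∀ j (h : j ∈ I), π j ∈ I ∧ - rho cs wL (al j) = al (π j) := by
    intro j h
    have := (wL_perm hw hm h).choose_spec
    simp only [π, dif_pos h]
    exact this
  have t1 : Tw cs I (1 : W) (1 : ℝ) id :=
    ⟨by simp, by simp, fun j hj => hj, fun j _ => by simp⟩
  have t2 : Tw cs I wL (-1 : ℝ) π :=
    ⟨hww, by norm_num, fun j hj => (hπ j hj).1, fun j hj => by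
      rw [neg_one_smul]; exact (hπ j hj).2⟩
  have m1 := t1.main _ (le_refl _) (fun j hj => hj) hfin rfl
  have m2 := t2.main _ (le_refl _) (fun j hj => (hπ j hj).1) hfin rfl
  have hG1 : GG cs (1 : W) (1 : ℝ) = LinearMap.id := by rw [GG, one_smul, rl_one]
  have hav : av cs wL (-1) I = PowerSeries.rescale (-1) (av cs 1 1 I) := by
    rw [av, av, hG1, PowerSeries.smul_eq_C_mul, PowerSeries.smul_eq_C_mul, map_mul, map_sum]
    congr 1
    · ext n
      rw [PowerSeries.coeff_rescale, PowerSeries.coeff_C]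
      split_ifs with h
      · simp [h]
      · simp
    · refine Finset.sum_nbij' (fun v => v * wL) (fun v => v * wL) ?_ ?_ ?_ ?_ ?_
      · intro v hv; exact mem_WF.2 (mul_mem (mem_WF.1 hv) hw)
      · intro v hv; exact mem_WF.2 (mul_mem (mem_WF.1 hv) hw)
      · intro v _; simp only [mul_assoc, hww, mul_one]
      · intro v _; simp only [mul_assoc, hww, mul_one]
      · intro v _
        rw [← hs_neg, LinearMap.comp_id, rl_mul]
        congr 1
        rw [GG, LinearMap.comp_smul]
        exact neg_one_smul ℝ (rl cs v ∘ₗ rl cs wL)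
  obtain ⟨a, b, hab, hinv⟩ := hs_inv (GG cs wL (-1)) (LinearMap.ext fun v => t2.GG_GG v)
  have hid := congrArg (PowerSeries.rescale (-1 : ℝ)) (hs_id (B := B))
  rw [← hG1, ← m1, ← hab, map_mul, map_mul, map_pow, map_sub, map_one, PowerSeries.rescale_X, map_neg,
    map_one, neg_one_mul, sub_neg_eq_add] at hid
  rw [← m2, hav] at hinv
  refine ⟨a, toPS_inj ?_⟩
  have hp : toPS (∑ x ∈ (WF cs I).filter (fun x => wL * x * wL = x), (X : ℤ[X]) ^ cs.length x) =
      PP cs wL I := by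
    rw [map_sum, PP]
    refine Finset.sum_congr rfl fun x _ => ?_
    rw [map_pow, toPS_X]
  have hr : toPS (∑ x ∈ WF cs I, (-X : ℤ[X]) ^ cs.length x) =
      PowerSeries.rescale (-1) (PP cs 1 I) := by
    have : (WF cs I).filter (fun x => 1 * x * 1 = x) = WF cs I := by simp
    rw [map_sum, PP, this, map_sum]
    refine Finset.sum_congr rfl fun x _ => ?_
    rw [map_pow, map_pow, map_neg, toPS_X, PowerSeries.rescale_X, map_neg, map_one, neg_one_mul]
  rw [map_mul, map_mul, hp, hr, map_pow, map_pow, map_sub, map_add, map_one, toPS_X]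
  set A := PowerSeries.rescale (-1 : ℝ) (av cs 1 1 I)
  set p := PP cs wL I
  set r := PowerSeries.rescale (-1 : ℝ) (PP cs 1 I)
  have hne : ((1 : PowerSeries ℝ) + PowerSeries.X) ^ b ≠ 0 := by
    apply pow_ne_zero
    intro h0
    have := congrArg (PowerSeries.constantCoeff) h0
    simp at this
  apply mul_right_cancel₀ hne
  rw [pow_add] at hid
  set u := ((1 : PowerSeries ℝ) + PowerSeries.X) ^ b
  set v := ((1 : PowerSeries ℝ) + PowerSeries.X) ^ a
  set z := ((1 : PowerSeries ℝ) - PowerSeries.X) ^ a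
  linear_combination (- p * z * u) * hid + (r * v * u) * hinv

theorem final_aux {I : Finset B} (hfin : Finite (WP cs I)) {wL : W} (hw : wL ∈ WP cs I)
    (hm : ∀ u ∈ WP cs I, cs.length u ≤ cs.length wL) {k : ℕ} (ex : Fin k → ℕ)
    (hex : (∑ x ∈ WF cs I, (X : ℤ[X]) ^ cs.length x) =
      ∏ i : Fin k, ∑ j ∈ Finset.range (ex i + 1), X ^ j) :
    (∑ x ∈ (WF cs I).filter (fun x => wL * x * wL = x), (X : ℤ[X]) ^ cs.length x) *
      (1 - X) ^ (Finset.univ.filter fun i => Odd (ex i)).card =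
    (∑ x ∈ WF cs I, (-X : ℤ[X]) ^ cs.length x) *
      (1 + X) ^ (Finset.univ.filter fun i => Odd (ex i)).card := by
  obtain ⟨a, ha⟩ := exists_a hfin hw hm
  obtain ⟨h, h1, h2⟩ := fac_prod ex
  have hn : (∑ x ∈ WF cs I, (-X : ℤ[X]) ^ cs.length x) =
      ∏ i : Fin k, ∑ j ∈ Finset.range (ex i + 1), (-X) ^ j := by
    have := congrArg (Polynomial.compRingHom (-X : ℤ[X])) hex
    simpa only [map_sum, map_prod, map_pow, Polynomial.coe_compRingHom_apply, X_comp] using this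
  have hp : (∑ x ∈ (WF cs I).filter (fun x => wL * x * wL = x),
      (X : ℤ[X]) ^ cs.length x).eval 1 ≠ 0 := by
    rw [Polynomial.eval_finsetSum]
    simp only [eval_pow, eval_X, one_pow, Finset.sum_const, nsmul_eq_mul, mul_one]
    have : (1 : W) ∈ (WF cs I).filter (fun x => wL * x * wL = x) :=
      Finset.mem_filter.2 ⟨mem_WF.2 (one_mem _), by rw [mul_one, wL_inv hw hm]⟩
    exact_mod_cast Finset.card_ne_zero_of_mem this
  have key : a = (Finset.univ.filter fun i => Odd (ex i)).card := by
    refine ord_unique (h := h * (1 + X) ^ a) hp ?_ ?_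
    · rw [eval_mul]
      refine mul_ne_zero h1 ?_
      simp
    · rw [ha, hn, h2]; ring
  rw [← key]
  exact ha

theorem finsum_if {R : Type} [AddCommMonoid R] (S : Finset W) (p : W → Prop) [DecidablePred p]
    (f : W → R) (h : ∀ x, x ∈ S ↔ p x) : (∑ᶠ x : W, if p x then f x else 0) = ∑ x ∈ S, f x := by
  rw [finsum_eq_sum_of_support_subset (s := S)]
  · exact Finset.sum_congr rfl fun x hx => if_pos ((h x).1 hx)
  · intro x hx
    by_contra hn
    apply hx
    exact if_neg fun hp => hn ((h x).2 hp)

end Poly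


/-- Let `L ⊊ S`, so that the subgroup `W_L` generated by `L` is a finite
Weyl group, with longest element `w_L`.  Then
`(Σ_{x ∈ W_L, w_L x w_L = x} q^{ℓ(x)}) (1−q)^{n_L} = (Σ_{x ∈ W_L} (−q)^{ℓ(x)}) (1+q)^{n_L}`
as polynomials in `q`, where `n_L` is the number of odd exponents of `W_L`; i.e.
`P_{L,Ad(w_L)}(q) = P_L(−q)·((1+q)/(1−q))^{n_L}`. -/
theorem P_L_Ad_wL (cs : CoxeterSystem M W) (D : AffineData cs)
    (L : Set W) (hL : L ⊂ Set.range cs.simple)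
    (hLfin : (Subgroup.closure L : Set W).Finite)
    (wL : W) (hwL_mem : wL ∈ Subgroup.closure L)
    (hwL_max : ∀ u ∈ Subgroup.closure L, cs.length u ≤ cs.length wL)
    (k : ℕ) (hk : k = L.ncard) (ex : Fin k → ℕ) (hex_pos : ∀ i, 0 < ex i)
    (hex : (∑ᶠ x : W, if x ∈ Subgroup.closure L
          then (Polynomial.X : Polynomial ℤ) ^ cs.length x else 0)
        = ∏ i : Fin k, ∑ j ∈ Finset.range (ex i + 1), (Polynomial.X : Polynomial ℤ) ^ j) :
    (∑ᶠ x : W, if x ∈ Subgroup.closure L ∧ wL * x * wL = x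
          then (Polynomial.X : Polynomial ℤ) ^ cs.length x else 0)
        * (1 - Polynomial.X) ^ (Finset.univ.filter fun i => Odd (ex i)).card
      = (∑ᶠ x : W, if x ∈ Subgroup.closure L
          then (-Polynomial.X : Polynomial ℤ) ^ cs.length x else 0)
        * (1 + Polynomial.X) ^ (Finset.univ.filter fun i => Odd (ex i)).card := by
  have : Fintype B := @Fintype.ofFinite B D.finB
  let I : Finset B := Finset.univ.filter fun j => cs.simple j ∈ L
  have hLI : L = cs.simple '' (I : Set B) := by
    ext x
    constructor
    · intro hx
      obtain ⟨j, rfl⟩ := hL.1 hx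
      exact ⟨j, by simpa [I] using hx, rfl⟩
    · rintro ⟨j, hj, rfl⟩
      simpa [I] using hj
  have hcl : Subgroup.closure L = WP cs I := by rw [hLI]; rfl
  rw [hcl] at hLfin hwL_mem
  simp only [hcl] at hwL_max hex ⊢
  have hfin : Finite (WP cs I) := hLfin
  rw [finsum_if (WF cs I) _ _ (fun x => mem_WF)] at hex ⊢
  rw [finsum_if ((WF cs I).filter (fun x => wL * x * wL = x)) _ _
    (fun x => by rw [Finset.mem_filter, mem_WF])]
  exact final_aux hfin hwL_mem hwL_max ex hex

end LY
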